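/- arXiv:1007.1128 — 2 statements merged into one kernel-verified Lean document; each statement's English description precedes it below -/
import Mathlib

section
/- Let f(e^{iθ}) = e^{V(e^{iθ})} where V(z) = V_1 z + V_{-1} z^{-1} is a Laurent polynomial. Then the strong Szegő asymptotic formula holds exactly in the limit: ln D_n(f) − n V_0 → V_1 V_{-1} as n → ∞, where V_0 = 0 here. Equivalently, D_n(e^{V_1 z + V_{-1}/z}) e^{-V_1 V_{-1}} → 1 as n → ∞. -/
open MeasureTheory Filter

open scoped Real

/-- Fourier coefficient of a symbol `f(e^{iθ})`, given as a function of `θ`. -/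
noncomputable def toeplitzCoeff (f : ℝ → ℂ) (j : ℤ) : ℂ :=
  (1 / (2 * (π : ℂ))) *
    ∫ θ in (0:ℝ)..(2 * π), f θ * Complex.exp (-(j * θ) * Complex.I)

/-- Toeplitz determinant of size `n` with symbol `f`. -/
noncomputable def toeplitzDet (f : ℝ → ℂ) (n : ℕ) : ℂ :=
  Matrix.det (Matrix.of fun j k : Fin n => toeplitzCoeff f ((j : ℤ) - (k : ℤ)))

theorem hasSum_toeplitzCoeff_exp_mul {g : ℝ → ℂ} (hg : Continuous g) (s : ℤ) (c : ℂ) (j : ℤ) :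
    HasSum (fun m : ℕ => c ^ m / m.factorial * toeplitzCoeff g (j - s * m))
      (toeplitzCoeff (fun θ => Complex.exp (c * Complex.exp (s * θ * Complex.I)) * g θ) j) := by
  have hexp : ∀ θ : ℝ, HasSum (fun m : ℕ => c ^ m / m.factorial *
      (g θ * Complex.exp (-((j - s * m : ℤ) * θ) * Complex.I)))
      (Complex.exp (c * Complex.exp (s * θ * Complex.I)) * g θ *
        Complex.exp (-(j * θ) * Complex.I)) := by
    intro θ
    have h := NormedSpace.expSeries_div_hasSum_exp (c * Complex.exp (s * θ * Complex.I))
    rw [← Complex.exp_eq_exp_ℂ] at h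
    have hshift : ∀ m : ℕ, Complex.exp (-((j - s * m : ℤ) * θ) * Complex.I) =
        Complex.exp (s * θ * Complex.I) ^ m * Complex.exp (-(j * θ) * Complex.I) := fun m => by
      rw [← Complex.exp_nat_mul, ← Complex.exp_add]
      push_cast
      ring_nf
    rw [mul_assoc]
    refine (h.mul_right (g θ * Complex.exp (-(j * θ) * Complex.I))).congr_fun fun m => ?_
    rw [hshift]
    ring
  have hnorm : ∀ (k : ℤ) (θ : ℝ), ‖Complex.exp (-(k * θ) * Complex.I)‖ = 1 := by
    intro k θ
    simpa using Complex.norm_exp_ofReal_mul_I (-(k * θ))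
  have hI := intervalIntegral.hasSum_integral_of_dominated_convergence (μ := volume)
    (a := 0) (b := 2 * π) (fun (m : ℕ) θ => ‖c‖ ^ m / m.factorial * ‖g θ‖)
    (F := fun (m : ℕ) θ => c ^ m / m.factorial *
      (g θ * Complex.exp (-((j - s * m : ℤ) * θ) * Complex.I)))
    (fun m => (by fun_prop : Continuous _).aestronglyMeasurable)
    (fun m => ae_of_all _ fun θ _ => by rw [norm_mul, norm_mul, hnorm]; simp)
    (ae_of_all _ fun θ _ => (Real.summable_pow_div_factorial _).mul_right _)
    (by
      simp_rw [tsum_mul_right]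
      exact (by fun_prop : Continuous _).intervalIntegrable _ _)
    (ae_of_all _ fun θ _ => hexp θ)
  convert! hI.mul_left (1 / (2 * (π : ℂ))) using 1
  ext m
  rw [intervalIntegral.integral_const_mul, toeplitzCoeff]
  ring

theorem sum_norm_toeplitzCoeff_exp_mul_le {g : ℝ → ℂ} (hg : Continuous g) {C : ℝ}
    (hC : ∀ S : Finset ℤ, ∑ j ∈ S, ‖toeplitzCoeff g j‖ ≤ C) (s : ℤ) (c : ℂ) (S : Finset ℤ) :
    ∑ j ∈ S, ‖toeplitzCoeff
      (fun θ => Complex.exp (c * Complex.exp (s * θ * Complex.I)) * g θ) j‖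
        ≤ Real.exp ‖c‖ * C := by
  have hle : ∀ j, ‖toeplitzCoeff g j‖ ≤ C := fun j => by simpa using hC {j}
  have hsum : ∀ j, Summable fun m : ℕ =>
      ‖c‖ ^ m / m.factorial * ‖toeplitzCoeff g (j - s * m)‖ := fun j =>
    .of_nonneg_of_le (fun m => by positivity)
      (fun m => mul_le_mul_of_nonneg_left (hle _) (by positivity))
      ((Real.summable_pow_div_factorial ‖c‖).mul_right C)
  have hexp : HasSum (fun m : ℕ => ‖c‖ ^ m / m.factorial) (Real.exp ‖c‖) := by
    rw [Real.exp_eq_exp_ℝ]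
    exact NormedSpace.expSeries_div_hasSum_exp _
  calc _ ≤ ∑ j ∈ S, ∑' m : ℕ, ‖c‖ ^ m / m.factorial * ‖toeplitzCoeff g (j - s * m)‖ := by
        refine Finset.sum_le_sum fun j _ => ?_
        rw [← (hasSum_toeplitzCoeff_exp_mul hg s c j).tsum_eq]
        refine (norm_tsum_le_tsum_norm ?_).trans_eq ?_
        · simpa using hsum j
        · simp
    _ = ∑' m : ℕ, ∑ j ∈ S, ‖c‖ ^ m / m.factorial * ‖toeplitzCoeff g (j - s * m)‖ :=
        (Summable.tsum_finsetSum fun j _ => hsum j).symm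
    _ ≤ ∑' m : ℕ, ‖c‖ ^ m / m.factorial * C := by
        refine Summable.tsum_le_tsum (fun m => ?_) (summable_sum fun j _ => hsum j)
          ((Real.summable_pow_div_factorial ‖c‖).mul_right C)
        rw [← Finset.mul_sum]
        gcongr
        have := hC (S.map (Equiv.subRight (s * m : ℤ)).toEmbedding)
        simpa using this
    _ = Real.exp ‖c‖ * C := by rw [tsum_mul_right, hexp.tsum_eq]

theorem toeplitzCoeff_one (j : ℤ) : toeplitzCoeff (fun _ => 1) j = if j = 0 then 1 else 0 := by
  have hpi : (π : ℂ) ≠ 0 := by exact_mod_cast Real.pi_ne_zero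
  split_ifs with hj
  · subst hj
    simp [toeplitzCoeff]
    field_simp
  · have hne : (-j * Complex.I : ℂ) ≠ 0 := by simp [hj]
    have h := integral_exp_mul_complex (a := 0) (b := 2 * π) hne
    have h2 : Complex.exp (-j * Complex.I * (2 * π : ℝ)) = 1 := by
      rw [Complex.exp_eq_one_iff]
      exact ⟨-j, by push_cast; ring⟩
    rw [h2] at h
    have h3 : ∀ θ : ℝ, (1 : ℂ) * Complex.exp (-(j * θ) * Complex.I) =
        Complex.exp (-j * Complex.I * θ) := fun θ => by
      rw [one_mul]
      ring_nf
    simp_rw [toeplitzCoeff, h3, h]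
    simp

theorem hasDerivAt_toeplitzCoeff_exp_mul {g : ℝ → ℂ} (hg : Continuous g) (s : ℤ) (c : ℂ) (j : ℤ) :
    HasDerivAt (fun z : ℂ => toeplitzCoeff
        (fun θ => Complex.exp (z * Complex.exp (s * θ * Complex.I)) * g θ) j)
      (toeplitzCoeff
        (fun θ => Complex.exp (c * Complex.exp (s * θ * Complex.I)) * g θ) (j - s)) c := by
  have hnorm : ∀ (k : ℤ) (θ : ℝ), ‖Complex.exp (k * θ * Complex.I)‖ = 1 := by
    intro k θ
    simpa using Complex.norm_exp_ofReal_mul_I (k * θ)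
  have h := (intervalIntegral.hasDerivAt_integral_of_dominated_loc_of_deriv_le (μ := volume)
    (a := 0) (b := 2 * π) (x₀ := c) (s := Metric.ball c 1)
    (F := fun (z : ℂ) θ => Complex.exp (z * Complex.exp (s * θ * Complex.I)) * g θ *
      Complex.exp (-(j * θ) * Complex.I))
    (F' := fun (z : ℂ) θ => Complex.exp (z * Complex.exp (s * θ * Complex.I)) * g θ *
      Complex.exp (-((j - s : ℤ) * θ) * Complex.I))
    (bound := fun θ => Real.exp (‖c‖ + 1) * ‖g θ‖)
    (Metric.ball_mem_nhds c one_pos)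
    (.of_forall fun z => (by fun_prop : Continuous _).aestronglyMeasurable)
    ((by fun_prop : Continuous _).intervalIntegrable _ _)
    (by fun_prop : Continuous _).aestronglyMeasurable
    (ae_of_all _ fun θ _ z hz => ?_)
    ((by fun_prop : Continuous _).intervalIntegrable _ _)
    (ae_of_all _ fun θ _ z _ => ?_)).2
  · exact h.const_mul (1 / (2 * (π : ℂ)))
  · have h1 := hnorm (-(j - s)) θ
    have hz' : ‖z‖ ≤ ‖c‖ + 1 := by
      have := norm_sub_norm_le z c
      rw [Metric.mem_ball, dist_eq_norm] at hz
      linarith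
    have h2 : ‖Complex.exp (-((j - s : ℤ) * θ) * Complex.I)‖ = 1 := by
      rw [← h1]
      push_cast
      ring_nf
    rw [norm_mul, h2, mul_one, norm_mul]
    gcongr
    refine (Complex.norm_exp_le_exp_norm _).trans ?_
    rw [norm_mul, hnorm, mul_one]
    gcongr
  · have h1 := ((hasDerivAt_id z).mul_const (Complex.exp (s * θ * Complex.I))).cexp
    have h2 := (h1.mul_const (g θ)).mul_const (Complex.exp (-(j * θ) * Complex.I))
    convert! h2 using 1
    have : Complex.exp (-((j - s : ℤ) * θ) * Complex.I) =
          Complex.exp (s * θ * Complex.I) * Complex.exp (-(j * θ) * Complex.I) := by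
      rw [← Complex.exp_add]
      congr 1
      push_cast
      ring
    rw [this]
    simp
    ring

/-- The symbol `exp (a z + b z⁻¹)` at `z = e^{iθ}`. -/
noncomputable def expLaurent (a b : ℂ) (θ : ℝ) : ℂ :=
  Complex.exp (a * Complex.exp (θ * Complex.I) + b * Complex.exp (-θ * Complex.I))

theorem expLaurent_eq (a b : ℂ) :
    expLaurent a b = fun θ : ℝ => Complex.exp (a * Complex.exp ((1 : ℤ) * θ * Complex.I)) *
      (Complex.exp (b * Complex.exp ((-1 : ℤ) * θ * Complex.I)) * 1) := by
  ext θ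
  simp [expLaurent, Complex.exp_add]

theorem sum_norm_toeplitzCoeff_expLaurent_le (a b : ℂ) (S : Finset ℤ) :
    ∑ j ∈ S, ‖toeplitzCoeff (expLaurent a b) j‖ ≤ Real.exp (‖a‖ + ‖b‖) := by
  have h1 : ∀ S : Finset ℤ, ∑ j ∈ S, ‖toeplitzCoeff (fun _ => 1) j‖ ≤ 1 := fun S => by
    simp_rw [toeplitzCoeff_one, apply_ite norm, norm_one, norm_zero, Finset.sum_ite_eq']
    split_ifs <;> norm_num
  rw [expLaurent_eq, Real.exp_add, ← mul_one (Real.exp ‖b‖)]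
  exact sum_norm_toeplitzCoeff_exp_mul_le (by fun_prop)
    (sum_norm_toeplitzCoeff_exp_mul_le continuous_const h1 (-1) b) 1 a S

theorem hasDerivAt_toeplitzCoeff_expLaurent (a b : ℂ) (j : ℤ) :
    HasDerivAt (fun z => toeplitzCoeff (expLaurent z b) j)
      (toeplitzCoeff (expLaurent a b) (j - 1)) a := by
  simp_rw [expLaurent_eq]
  exact hasDerivAt_toeplitzCoeff_exp_mul (by fun_prop) 1 a j

theorem toeplitzCoeff_expLaurent_zero (b : ℂ) {j : ℤ} (hj : 0 ≤ j) :
    toeplitzCoeff (expLaurent 0 b) j = if j = 0 then 1 else 0 := by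
  have h := hasSum_toeplitzCoeff_exp_mul (g := fun _ => 1) continuous_const (-1) b j
  simp_rw [toeplitzCoeff_one] at h
  have h0 := hasSum_single (f := fun m : ℕ => b ^ m / m.factorial *
    (if j - (-1 : ℤ) * m = 0 then (1 : ℂ) else 0)) 0 fun m hm => by
      rw [if_neg (by lia), mul_zero]
  rw [expLaurent_eq]
  simpa using h.unique h0

theorem hasSum_mul_toeplitzCoeff_expLaurent (a b : ℂ) {j : ℤ} (hj : j < 0) :
    HasSum (fun m : ℕ => (-b) ^ m / m.factorial * toeplitzCoeff (expLaurent a b) (j + m)) 0 := by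
  have hc : Continuous (expLaurent a b) := by
    rw [expLaurent_eq]
    fun_prop
  have h := hasSum_toeplitzCoeff_exp_mul hc (-1) (-b) j
  have h1 := hasSum_toeplitzCoeff_exp_mul (g := fun _ => 1) continuous_const 1 a j
  have h2 : (fun θ : ℝ => Complex.exp (-b * Complex.exp ((-1 : ℤ) * θ * Complex.I)) *
      expLaurent a b θ) = fun θ : ℝ => Complex.exp (a * Complex.exp ((1 : ℤ) * θ * Complex.I)) *
        1 := by
    ext θ
    rw [expLaurent, ← Complex.exp_add, mul_one]
    congr 1
    push_cast
    ring_nf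
  have h3 : ∀ m : ℕ, a ^ m / m.factorial * toeplitzCoeff (fun _ => 1) (j - 1 * m) = 0 := fun m => by
    rw [toeplitzCoeff_one, if_neg (by lia), mul_zero]
  simp_rw [h3] at h1
  rw [h2, h1.unique hasSum_zero] at h
  simpa using h

theorem norm_det_le_prod_sum_norm {n : Type*} [Fintype n] [DecidableEq n] (M : Matrix n n ℂ) :
    ‖M.det‖ ≤ ∏ i, ∑ j, ‖M i j‖ := by
  rw [← Matrix.det_transpose, Matrix.det_apply, Finset.prod_univ_sum, Fintype.piFinset_univ]
  calc _ ≤ ∑ σ : Equiv.Perm n, ∏ i, ‖M i (σ i)‖ := by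
        refine (norm_sum_le _ _).trans (Finset.sum_le_sum fun σ _ => ?_)
        rcases Int.units_eq_one_or (Equiv.Perm.sign σ) with h | h <;> simp [h]
    _ = ∑ p ∈ Finset.univ.map ⟨fun σ : Equiv.Perm n => (σ : n → n), DFunLike.coe_injective⟩,
          ∏ i, ‖M i (p i)‖ := by simp
    _ ≤ ∑ p : n → n, ∏ i, ‖M i (p i)‖ :=
        Finset.sum_le_sum_of_subset_of_nonneg (Finset.subset_univ _) fun p _ _ => by positivity

theorem HasDerivAt.matrix_det {n : Type*} [Fintype n] [DecidableEq n] {M : ℂ → Matrix n n ℂ}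
    {M' : Matrix n n ℂ} {z : ℂ} (hM : ∀ i j, HasDerivAt (fun w => M w i j) (M' i j) z) :
    HasDerivAt (fun w => (M w).det) (∑ i, ((M z).updateRow i (M' i)).det) z := by
  let f : ContinuousMultilinearMap ℂ (fun _ : n => n → ℂ) ℂ :=
    { (Matrix.detRowAlternating (n := n) (R := ℂ)).toMultilinearMap with
      cont := by exact Continuous.matrix_det (A := fun M : Matrix n n ℂ => M) continuous_id }
  have hrow : ∀ i, HasDerivAt (fun w => M w i) (M' i) z := fun i => hasDerivAt_pi.2 (hM i)
  have h := (HasFDerivAt.multilinear_comp (f := f) fun i => (hrow i).hasFDerivAt).hasDerivAt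
  simp only [_root_.sum_apply, ContinuousLinearMap.comp_apply,
    ContinuousLinearMap.toSpanSingleton_apply, one_smul,
    ContinuousMultilinearMap.toContinuousLinearMap_apply] at h
  exact h

/-- The rows are the columns of the Toeplitz matrix of the symbol `exp (a z + b z⁻¹)`. -/
noncomputable def expLaurentMatrix (a b : ℂ) (n : ℕ) : Matrix (Fin n) (Fin n) ℂ :=
  Matrix.of fun k j => toeplitzCoeff (expLaurent a b) ((j : ℤ) - (k : ℤ))

theorem hasDerivAt_det_expLaurentMatrix (a b : ℂ) (N : ℕ) :
    HasDerivAt (fun z => (expLaurentMatrix z b (N + 1)).det)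
      ((expLaurentMatrix a b (N + 1)).updateRow (Fin.last N)
        fun j => toeplitzCoeff (expLaurent a b) ((j : ℤ) - (N + 1))).det a := by
  have h := HasDerivAt.matrix_det (M := fun z => expLaurentMatrix z b (N + 1))
    (M' := Matrix.of fun k j => toeplitzCoeff (expLaurent a b) ((j : ℤ) - (k : ℤ) - 1))
    (z := a) fun k j => hasDerivAt_toeplitzCoeff_expLaurent a b _
  rw [Fin.sum_univ_castSucc, Finset.sum_eq_zero, zero_add] at h
  · convert h using 4
    simp [sub_sub]
  · intro k _
    refine Matrix.det_zero_of_row_eq (i := k.castSucc) (j := k.succ) k.castSucc_lt_succ.ne ?_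
    rw [Matrix.updateRow_self, Matrix.updateRow_ne k.castSucc_lt_succ.ne']
    ext j
    simp [expLaurentMatrix, sub_sub]

/-- The part of the last column that is not a combination of the columns of the Toeplitz
matrix. -/
noncomputable def expLaurentError (a b : ℂ) (N : ℕ) (j : Fin (N + 1)) : ℂ :=
  -∑' m : ℕ, (-b) ^ (m + (N + 2)) / (m + (N + 2)).factorial *
    toeplitzCoeff (expLaurent a b) ((j : ℤ) + 1 + m)

theorem toeplitzCoeff_expLaurent_eq_add_error (a b : ℂ) (N : ℕ) :
    (fun j : Fin (N + 1) => toeplitzCoeff (expLaurent a b) ((j : ℤ) - (N + 1))) =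
      (∑ k : Fin (N + 1), (-((-b) ^ (N + 1 - k : ℕ) / (N + 1 - k : ℕ).factorial)) •
        expLaurentMatrix a b (N + 1) k) + expLaurentError a b N := by
  ext j
  have h := hasSum_mul_toeplitzCoeff_expLaurent a b (j := (j : ℤ) - (N + 1))
    (by have := j.isLt; lia)
  have h1 := h.summable.sum_add_tsum_nat_add (N + 2)
  rw [h.tsum_eq, Finset.sum_range_succ', ← Finset.sum_range_reflect] at h1
  have h2 : ∀ m : ℕ, (j : ℤ) - (N + 1) + ((m + (N + 2) : ℕ) : ℤ) = j + 1 + m := fun m => by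
    push_cast
    ring
  have h3 : ∀ k ∈ Finset.range (N + 1), (-b) ^ (N + 1 - 1 - k + 1) /
      (N + 1 - 1 - k + 1).factorial * toeplitzCoeff (expLaurent a b)
        ((j : ℤ) - (N + 1) + ((N + 1 - 1 - k + 1 : ℕ) : ℤ)) =
      (-b) ^ (N + 1 - k) / (N + 1 - k).factorial * toeplitzCoeff (expLaurent a b)
        ((j : ℤ) - k) := fun k hk => by
    rw [Finset.mem_range] at hk
    rw [show N + 1 - 1 - k + 1 = N + 1 - k by lia,
      show (j : ℤ) - (N + 1) + ((N + 1 - k : ℕ) : ℤ) = j - k by lia]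
  simp_rw [h2] at h1
  rw [Finset.sum_congr rfl h3] at h1
  simp only [expLaurentError, expLaurentMatrix, Pi.add_apply, Finset.sum_apply, Pi.smul_apply,
    Matrix.of_apply, smul_eq_mul, neg_mul, Finset.sum_neg_distrib]
  rw [Fin.sum_univ_eq_sum_range fun k => (-b) ^ (N + 1 - k) / (N + 1 - k).factorial *
    toeplitzCoeff (expLaurent a b) ((j : ℤ) - k)]
  simp only [pow_zero, Nat.factorial_zero, Nat.cast_one, div_one, one_mul, Nat.cast_zero,
    add_zero] at h1
  linear_combination h1

theorem det_updateRow_eq_add_error (a b : ℂ) (N : ℕ) :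
    ((expLaurentMatrix a b (N + 1)).updateRow (Fin.last N)
        fun j => toeplitzCoeff (expLaurent a b) ((j : ℤ) - (N + 1))).det =
      b * (expLaurentMatrix a b (N + 1)).det +
        ((expLaurentMatrix a b (N + 1)).updateRow (Fin.last N) (expLaurentError a b N)).det := by
  rw [toeplitzCoeff_expLaurent_eq_add_error, Matrix.det_updateRow_add, Matrix.det_updateRow_sum]
  simp

theorem sum_norm_toeplitzCoeff_add_le (a b : ℂ) (n : ℕ) (d : ℤ) :
    ∑ j : Fin n, ‖toeplitzCoeff (expLaurent a b) ((j : ℤ) + d)‖ ≤ Real.exp (‖a‖ + ‖b‖) := by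
  have := sum_norm_toeplitzCoeff_expLaurent_le a b ((Finset.univ : Finset (Fin n)).map
    ⟨fun j : Fin n => (j : ℤ) + d, fun i j h => by simpa [Fin.ext_iff] using h⟩)
  rwa [Finset.sum_map] at this

theorem sum_norm_expLaurentError_le (a b : ℂ) (N : ℕ) :
    ∑ j, ‖expLaurentError a b N j‖ ≤
      ∑' m : ℕ, ‖b‖ ^ (m + (N + 2)) / (m + (N + 2)).factorial * Real.exp (‖a‖ + ‖b‖) := by
  have hs := ((summable_nat_add_iff (N + 2)).2 (Real.summable_pow_div_factorial ‖b‖)).mul_right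
    (Real.exp (‖a‖ + ‖b‖))
  have hle : ∀ j, ‖toeplitzCoeff (expLaurent a b) j‖ ≤ Real.exp (‖a‖ + ‖b‖) := fun j => by
    simpa using sum_norm_toeplitzCoeff_expLaurent_le a b {j}
  have hsum : ∀ j : Fin (N + 1), Summable fun m : ℕ =>
      ‖b‖ ^ (m + (N + 2)) / (m + (N + 2)).factorial *
        ‖toeplitzCoeff (expLaurent a b) ((j : ℤ) + 1 + m)‖ := fun j =>
    .of_nonneg_of_le (fun m => by positivity)
      (fun m => mul_le_mul_of_nonneg_left (hle _) (by positivity)) hs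
  calc _ ≤ ∑ j : Fin (N + 1), ∑' m : ℕ, ‖b‖ ^ (m + (N + 2)) / (m + (N + 2)).factorial *
        ‖toeplitzCoeff (expLaurent a b) ((j : ℤ) + 1 + m)‖ := by
        refine Finset.sum_le_sum fun j _ => ?_
        rw [expLaurentError, norm_neg]
        refine (norm_tsum_le_tsum_norm ?_).trans_eq ?_
        · simpa using hsum j
        · simp
    _ = ∑' m : ℕ, ∑ j : Fin (N + 1), ‖b‖ ^ (m + (N + 2)) / (m + (N + 2)).factorial *
        ‖toeplitzCoeff (expLaurent a b) ((j : ℤ) + 1 + m)‖ :=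
        (Summable.tsum_finsetSum fun j _ => hsum j).symm
    _ ≤ _ := by
        refine Summable.tsum_le_tsum (fun m => ?_) (summable_sum fun j _ => hsum j) hs
        rw [← Finset.mul_sum]
        gcongr
        simpa [add_assoc] using sum_norm_toeplitzCoeff_add_le a b (N + 1) (1 + m)

theorem norm_det_updateRow_error_le (a b : ℂ) (N : ℕ) {C : ℝ} (hC : Real.exp (‖a‖ + ‖b‖) ≤ C) :
    ‖((expLaurentMatrix a b (N + 1)).updateRow (Fin.last N) (expLaurentError a b N)).det‖ ≤
      ∑' m : ℕ, (C * ‖b‖) ^ (m + (N + 2)) / (m + (N + 2)).factorial := by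
  have hC1 : 1 ≤ C := (Real.one_le_exp (by positivity)).trans hC
  have hrow : ∀ k : Fin N, ∑ j, ‖expLaurentMatrix a b (N + 1) k.castSucc j‖ ≤ C := fun k => by
    simpa [expLaurentMatrix, sub_eq_add_neg] using
      (sum_norm_toeplitzCoeff_add_le a b (N + 1) (-k)).trans hC
  refine (norm_det_le_prod_sum_norm _).trans ?_
  rw [Fin.prod_univ_castSucc]
  simp only [Matrix.updateRow_self, Matrix.updateRow_ne (Fin.castSucc_lt_last _).ne]
  calc _ ≤ (∏ _k : Fin N, C) *
        ∑' m : ℕ, ‖b‖ ^ (m + (N + 2)) / (m + (N + 2)).factorial * Real.exp (‖a‖ + ‖b‖) := by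
        gcongr with k
        · exact hrow k
        · exact sum_norm_expLaurentError_le a b N
    _ = ∑' m : ℕ, C ^ N *
        (‖b‖ ^ (m + (N + 2)) / (m + (N + 2)).factorial * Real.exp (‖a‖ + ‖b‖)) := by
        simp [tsum_mul_left]
    _ ≤ _ := by
        refine Summable.tsum_le_tsum (fun m => ?_)
          ((((summable_nat_add_iff (N + 2)).2
            (Real.summable_pow_div_factorial ‖b‖)).mul_right _).mul_left _)
          ((summable_nat_add_iff (N + 2)).2 (Real.summable_pow_div_factorial (C * ‖b‖)))
        calc _ ≤ C ^ N * (‖b‖ ^ (m + (N + 2)) / (m + (N + 2)).factorial * C) := by gcongr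
          _ = C ^ (N + 1) * (‖b‖ ^ (m + (N + 2)) / (m + (N + 2)).factorial) := by ring
          _ ≤ C ^ (m + (N + 2)) * (‖b‖ ^ (m + (N + 2)) / (m + (N + 2)).factorial) := by
            gcongr ?_ * _
            exact pow_le_pow_right₀ hC1 (by lia)
          _ = _ := by rw [mul_pow, mul_div_assoc]

theorem det_expLaurentMatrix_zero (b : ℂ) (n : ℕ) : (expLaurentMatrix 0 b n).det = 1 := by
  rw [Matrix.det_of_isLowerTriangular]
  · simp [expLaurentMatrix, toeplitzCoeff_expLaurent_zero]
  · intro k j hkj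
    have hkj' : (k : ℕ) < j := hkj
    rw [expLaurentMatrix, Matrix.of_apply, toeplitzCoeff_expLaurent_zero _ (by lia),
      if_neg (by lia)]

theorem norm_det_mul_exp_sub_one_le (a b : ℂ) (N : ℕ) :
    ‖(expLaurentMatrix a b (N + 1)).det * Complex.exp (-(a * b)) - 1‖ ≤
      (∑' m : ℕ, (Real.exp (‖a‖ + ‖b‖) * ‖b‖) ^ (m + (N + 2)) / (m + (N + 2)).factorial) *
        Real.exp (‖a‖ * ‖b‖) * ‖a‖ := by
  have hd : ∀ z, HasDerivAt
      (fun z => (expLaurentMatrix z b (N + 1)).det * Complex.exp (-(z * b)))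
      (((expLaurentMatrix z b (N + 1)).updateRow (Fin.last N) (expLaurentError z b N)).det *
        Complex.exp (-(z * b))) z := fun z => by
    have h := hasDerivAt_det_expLaurentMatrix z b N
    rw [det_updateRow_eq_add_error] at h
    convert! h.mul ((hasDerivAt_id z).mul_const b).neg.cexp using 1
    simp
    ring
  have h := (convex_closedBall (0 : ℂ) ‖a‖).norm_image_sub_le_of_norm_hasDerivWithin_le
    (fun z _ => (hd z).hasDerivWithinAt) (C := (∑' m : ℕ, (Real.exp (‖a‖ + ‖b‖) * ‖b‖) ^
      (m + (N + 2)) / (m + (N + 2)).factorial) * Real.exp (‖a‖ * ‖b‖)) (x := 0) (y := a)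
    (fun z hz => ?_) (by simp) (by simp)
  · simpa [det_expLaurentMatrix_zero] using h
  · have hz' : ‖z‖ ≤ ‖a‖ := by simpa using hz
    rw [norm_mul]
    gcongr
    · exact norm_det_updateRow_error_le z b N (by gcongr)
    · refine (Complex.norm_exp_le_exp_norm _).trans ?_
      rw [norm_neg, norm_mul]
      gcongr

/-- The strong Szegő limit theorem for the symbol `f(z) = exp(Vp z + Vm z⁻¹)`:
`D_n(f) e^{-Vp Vm} → 1` as `n → ∞`. -/
theorem szego_exp_laurent (Vp Vm : ℂ) :
    Tendsto
      (fun n : ℕ =>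
        toeplitzDet
          (fun θ : ℝ =>
            Complex.exp (Vp * Complex.exp (θ * Complex.I)
              + Vm * Complex.exp (-θ * Complex.I))) n
          * Complex.exp (-(Vp * Vm)))
      atTop (nhds 1) := by
  have hdet : ∀ n : ℕ, toeplitzDet (fun θ : ℝ => Complex.exp (Vp * Complex.exp (θ * Complex.I)
      + Vm * Complex.exp (-θ * Complex.I))) n = (expLaurentMatrix Vp Vm n).det := fun n => by
    rw [← Matrix.det_transpose]
    rfl
  simp_rw [hdet]
  rw [← tendsto_add_atTop_iff_nat 1, tendsto_iff_norm_sub_tendsto_zero]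
  refine squeeze_zero (fun _ => norm_nonneg _) (norm_det_mul_exp_sub_one_le Vp Vm) ?_
  have h := (tendsto_add_atTop_iff_nat 2).2 (tendsto_sum_nat_add fun m : ℕ =>
    (Real.exp (‖Vp‖ + ‖Vm‖) * ‖Vm‖) ^ m / m.factorial)
  simpa using (h.mul_const (Real.exp (‖Vp‖ * ‖Vm‖))).mul_const ‖Vp‖
end

section
/- The Toeplitz determinant Δ_{n,λ} = D_n(exp(√λ (z + z^{−1}))) is Gessel's generating function for the longest increasing subsequence problem: Δ_{n,λ} = ∑_{N=0}^{∞} u_n(N) λ^N / (N!)², where u_n(N) is the number of permutations π in S_N whose longest increasing subsequence has length at most n. -/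
open MeasureTheory

open scoped Real

/-- Fourier coefficient of the symbol `exp(√λ (z + z⁻¹))` on the unit circle. -/
noncomputable def gesselCoeff (lam : ℝ) (j : ℤ) : ℂ :=
  (1 / (2 * (π : ℂ))) *
    ∫ θ in (0:ℝ)..(2 * π),
      Complex.exp ((Real.sqrt lam : ℂ) *
          (Complex.exp (θ * Complex.I) + Complex.exp (-θ * Complex.I))) *
        Complex.exp (-(j * θ) * Complex.I)

/-- The Toeplitz determinant `Δ_{n,λ} = D_n(exp(√λ (z + z⁻¹)))`. -/
noncomputable def gesselDet (lam : ℝ) (n : ℕ) : ℂ :=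
  Matrix.det (Matrix.of fun j k : Fin n => gesselCoeff lam ((j : ℤ) - (k : ℤ)))

/-- `u_n(N)`: the number of permutations of `{1,…,N}` whose longest increasing
subsequence has length at most `n`. -/
noncomputable def permCount (n N : ℕ) : ℕ :=
  Nat.card {σ : Equiv.Perm (Fin N) //
    ∀ s : Finset (Fin N), StrictMonoOn σ ↑s → s.card ≤ n}


section Torus

/-- The measure on `(0, 2π]^n` used to average over the torus. -/
noncomputable abbrev torusMeasure (n : ℕ) : Measure (Fin n → ℝ) :=
  Measure.pi fun _ => volume.restrict (Set.Ioc 0 (2 * π))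

/-- The Laurent monomial `z ^ (-v)` at `z = exp (iθ)`. -/
noncomputable def torusMonomial {n : ℕ} (v : Fin n → ℤ) (θ : Fin n → ℝ) : ℂ :=
  ∏ i, Complex.exp (-(v i * θ i) * Complex.I)

/-- The coefficient of `z ^ v` in `(∑ z_i) ^ k * (∑ z_i⁻¹) ^ l`: the number of walks from the
origin to `v` with `k` positive and then `l` negative unit steps. -/
noncomputable def torusWalk {n : ℕ} (k l : ℕ) (v : Fin n → ℤ) : ℂ :=
  (1 / (2 * (π : ℂ))) ^ n * ∫ θ, (∑ i, Complex.exp (θ i * Complex.I)) ^ k *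
    (∑ i, Complex.exp (-θ i * Complex.I)) ^ l * torusMonomial v θ ∂(torusMeasure n)

variable {n : ℕ}

lemma continuous_torusMonomial (v : Fin n → ℤ) : Continuous (torusMonomial v) := by
  unfold torusMonomial
  fun_prop

lemma norm_torusMonomial (v : Fin n → ℤ) (θ : Fin n → ℝ) : ‖torusMonomial v θ‖ = 1 := by
  rw [torusMonomial, norm_prod]
  refine Finset.prod_eq_one fun i _ => ?_
  have := Complex.norm_exp_ofReal_mul_I (-(v i * θ i))
  push_cast at this
  exact this

lemma norm_sum_exp_le (θ : Fin n → ℝ) : ‖∑ i, Complex.exp (θ i * Complex.I)‖ ≤ n := by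
  refine (norm_sum_le _ _).trans ?_
  simp [Complex.norm_exp_ofReal_mul_I]

lemma norm_sum_exp_neg_le (θ : Fin n → ℝ) : ‖∑ i, Complex.exp (-θ i * Complex.I)‖ ≤ n := by
  simpa using norm_sum_exp_le fun i => -θ i

lemma torusMonomial_sub_single (v : Fin n → ℤ) (i : Fin n) (θ : Fin n → ℝ) :
    torusMonomial (v - Pi.single i 1) θ = Complex.exp (θ i * Complex.I) * torusMonomial v θ := by
  have h : Complex.exp (θ i * Complex.I) =
      ∏ j, Complex.exp ((Pi.single i (1 : ℤ) : Fin n → ℤ) j * θ j * Complex.I) := by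
    rw [Finset.prod_eq_single i] <;> simp +contextual
  rw [h, torusMonomial, torusMonomial, ← Finset.prod_mul_distrib]
  refine Finset.prod_congr rfl fun j _ => ?_
  rw [← Complex.exp_add]
  congr 1
  simp only [Pi.sub_apply]
  push_cast
  ring

lemma torusMonomial_add_single (v : Fin n → ℤ) (i : Fin n) (θ : Fin n → ℝ) :
    torusMonomial (v + Pi.single i 1) θ = Complex.exp (-θ i * Complex.I) * torusMonomial v θ := by
  have h := torusMonomial_sub_single (v + Pi.single i 1) i θ
  rw [add_sub_cancel_right] at h
  rw [h, ← mul_assoc, ← Complex.exp_add]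
  simp

lemma integrable_torus (k l : ℕ) (v : Fin n → ℤ) :
    Integrable (fun θ : Fin n → ℝ => (∑ i, Complex.exp (θ i * Complex.I)) ^ k *
      (∑ i, Complex.exp (-θ i * Complex.I)) ^ l * torusMonomial v θ) (torusMeasure n) := by
  refine Integrable.mono' (integrable_const ((n : ℝ) ^ k * (n : ℝ) ^ l)) ?_ ?_
  · have := continuous_torusMonomial v
    exact Continuous.aestronglyMeasurable (by fun_prop)
  · refine Filter.Eventually.of_forall fun θ => ?_
    rw [norm_mul, norm_mul, norm_pow, norm_pow, norm_torusMonomial, mul_one]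
    gcongr
    · exact norm_sum_exp_le θ
    · exact norm_sum_exp_neg_le θ

lemma torusWalk_succ_left (k l : ℕ) (v : Fin n → ℤ) :
    torusWalk (k + 1) l v = ∑ i, torusWalk k l (v - Pi.single i 1) := by
  simp only [torusWalk]
  rw [← Finset.mul_sum, ← integral_finsetSum _ fun i _ => integrable_torus _ _ _]
  congr 2 with θ
  simp only [torusMonomial_sub_single, pow_succ]
  simp only [← Finset.mul_sum, ← Finset.sum_mul]
  ring

lemma torusWalk_succ_right (k l : ℕ) (v : Fin n → ℤ) :
    torusWalk k (l + 1) v = ∑ i, torusWalk k l (v + Pi.single i 1) := by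
  simp only [torusWalk]
  rw [← Finset.mul_sum, ← integral_finsetSum _ fun i _ => integrable_torus _ _ _]
  congr 2 with θ
  simp only [torusMonomial_add_single, pow_succ]
  simp only [← Finset.mul_sum, ← Finset.sum_mul]
  ring

lemma integral_exp_neg_int_mul (m : ℤ) :
    (1 / (2 * (π : ℂ))) * ∫ θ in Set.Ioc 0 (2 * π), Complex.exp (-(m * θ) * Complex.I) =
      if m = 0 then 1 else 0 := by
  have hπ : (π : ℂ) ≠ 0 := by exact_mod_cast Real.pi_ne_zero
  rw [← intervalIntegral.integral_of_le (by positivity)]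
  split_ifs with h
  · subst h
    simp
    field_simp
  · have hc : -(m * Complex.I) ≠ 0 := by simp [h]
    have he : ∀ θ : ℝ, Complex.exp (-(m * θ) * Complex.I) =
        Complex.exp (-(m * Complex.I) * θ) := fun θ => by ring_nf
    simp only [he]
    rw [integral_exp_mul_complex hc]
    have : -(m * Complex.I) * ((2 * π : ℝ) : ℂ) = ((-m : ℤ) : ℂ) * (2 * π * Complex.I) := by
      push_cast; ring
    rw [this, Complex.exp_int_mul_two_pi_mul_I]
    simp

lemma torusWalk_zero_zero (v : Fin n → ℤ) :
    torusWalk 0 0 v = if v = 0 then 1 else 0 := by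
  simp only [torusWalk, torusMonomial, pow_zero, one_mul]
  rw [integral_fintype_prod_eq_prod fun i (θ : ℝ) => Complex.exp (-(v i * θ) * Complex.I)]
  have : (1 / (2 * (π : ℂ))) ^ n = ∏ _i : Fin n, (1 / (2 * (π : ℂ))) := by simp
  rw [this, ← Finset.prod_mul_distrib]
  simp only [integral_exp_neg_int_mul, Finset.prod_ite_zero, Finset.prod_const_one, funext_iff]
  simp

lemma hasSum_exp_mul (s z : ℂ) :
    HasSum (fun k : ℕ => s ^ k / (k.factorial : ℂ) * z ^ k) (Complex.exp (s * z)) := by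
  rw [Complex.exp_eq_exp_ℂ]
  have h := NormedSpace.expSeries_div_hasSum_exp (s * z)
  simp only [mul_pow, mul_div_right_comm] at h
  exact h

lemma hasSum_exp_mul_exp (s z w : ℂ) :
    HasSum (fun p : ℕ × ℕ => s ^ p.1 / (p.1.factorial : ℂ) * (s ^ p.2 / (p.2.factorial : ℂ)) *
      (z ^ p.1 * w ^ p.2)) (Complex.exp (s * z) * Complex.exp (s * w)) := by
  have h1 := hasSum_exp_mul s z
  have h2 := hasSum_exp_mul s w
  have h := (summable_mul_of_summable_norm h1.summable.norm h2.summable.norm).hasSum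
  rw [← tsum_mul_tsum_of_summable_norm h1.summable.norm h2.summable.norm, h1.tsum_eq,
    h2.tsum_eq] at h
  refine (congrArg (HasSum · _) (funext fun p => ?_)).mp h
  ring

lemma prod_gesselCoeff_hasSum (lam : ℝ) (v : Fin n → ℤ) :
    HasSum (fun p : ℕ × ℕ => ((√lam : ℂ) ^ p.1 / (p.1.factorial : ℂ)) *
      ((√lam : ℂ) ^ p.2 / (p.2.factorial : ℂ)) * torusWalk p.1 p.2 v)
      (∏ i, gesselCoeff lam (v i)) := by
  set s : ℝ := √lam with hs
  have hs0 : 0 ≤ s := Real.sqrt_nonneg _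
  let c : ℕ × ℕ → ℂ := fun p => ((s : ℂ) ^ p.1 / (p.1.factorial : ℂ)) *
      ((s : ℂ) ^ p.2 / (p.2.factorial : ℂ))
  let F : ℕ × ℕ → (Fin n → ℝ) → ℂ := fun p θ => c p *
    ((∑ i, Complex.exp (θ i * Complex.I)) ^ p.1 *
      (∑ i, Complex.exp (-θ i * Complex.I)) ^ p.2 * torusMonomial v θ)
  let b : ℕ → ℝ := fun k => (s * n) ^ k / (k.factorial : ℝ)
  have hb : Summable b := Real.summable_pow_div_factorial _
  have hb0 : ∀ k, 0 ≤ b k := fun k => by positivity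
  have hbb : Summable fun p : ℕ × ℕ => b p.1 * b p.2 := hb.mul_of_nonneg hb hb0 hb0
  have hF : HasSum (fun p => ∫ θ, F p θ ∂(torusMeasure n))
      (∫ θ : Fin n → ℝ, Complex.exp (s * ∑ i, Complex.exp (θ i * Complex.I)) *
        Complex.exp (s * ∑ i, Complex.exp (-θ i * Complex.I)) * torusMonomial v θ
          ∂(torusMeasure n)) := by
    refine hasSum_integral_of_dominated_convergence (fun p _ => b p.1 * b p.2)
      (fun p => ((integrable_torus p.1 p.2 v).const_mul _).1) (fun p => ?_) ?_ ?_ ?_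
    · refine Filter.Eventually.of_forall fun θ => ?_
      simp only [F, c, norm_mul, norm_pow, norm_div, norm_torusMonomial, mul_one,
        Complex.norm_natCast, Complex.norm_real, Real.norm_of_nonneg hs0, b, mul_pow]
      have h1 := norm_sum_exp_le θ
      have h2 := norm_sum_exp_neg_le θ
      calc _ ≤ s ^ p.1 / p.1.factorial * (s ^ p.2 / p.2.factorial) * ((n : ℝ) ^ p.1 *
            (n : ℝ) ^ p.2) := by gcongr
        _ = _ := by ring
    · exact Filter.Eventually.of_forall fun _ => hbb
    · exact integrable_const _
    · refine Filter.Eventually.of_forall fun θ => ?_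
      have h := (hasSum_exp_mul_exp s (∑ i, Complex.exp (θ i * Complex.I))
        (∑ i, Complex.exp (-θ i * Complex.I))).mul_right (torusMonomial v θ)
      simp only [F, c, ← mul_assoc] at h ⊢
      exact h
  have hF' := hF.mul_left ((1 / (2 * (π : ℂ))) ^ n)
  have hl : ∀ p, (1 / (2 * (π : ℂ))) ^ n * ∫ θ, F p θ ∂(torusMeasure n) =
      c p * torusWalk p.1 p.2 v := fun p => by
    simp only [torusWalk, F, integral_const_mul]
    ring
  have hr : (1 / (2 * (π : ℂ))) ^ n *
      (∫ θ : Fin n → ℝ, Complex.exp (s * ∑ i, Complex.exp (θ i * Complex.I)) *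
        Complex.exp (s * ∑ i, Complex.exp (-θ i * Complex.I)) * torusMonomial v θ
          ∂(torusMeasure n)) = ∏ i, gesselCoeff lam (v i) := by
    have h1 : (1 / (2 * (π : ℂ))) ^ n = ∏ _i : Fin n, (1 / (2 * (π : ℂ))) := by simp
    simp only [gesselCoeff, Finset.prod_mul_distrib]
    rw [← h1]
    congr 1
    simp only [intervalIntegral.integral_of_le (show 0 ≤ 2 * π by positivity)]
    rw [← integral_fintype_prod_eq_prod fun i (θ : ℝ) => Complex.exp ((s : ℂ) *
          (Complex.exp (θ * Complex.I) + Complex.exp (-θ * Complex.I))) *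
        Complex.exp (-(v i * θ) * Complex.I)]
    congr 1 with θ
    rw [Finset.prod_mul_distrib, torusMonomial, ← Complex.exp_add, Finset.mul_sum,
      Finset.mul_sum, ← Finset.sum_add_distrib, Complex.exp_sum]
    simp only [mul_add]
  rw [hr] at hF'
  simp only [hl] at hF'
  exact hF'

end Torus

section Alternant

variable {n : ℕ}

lemma torusWalk_comp_perm (τ : Equiv.Perm (Fin n)) (k l : ℕ) (v : Fin n → ℤ) :
    torusWalk k l (v ∘ τ) = torusWalk k l v := by
  induction k generalizing v with
  | zero =>
    induction l generalizing v with
    | zero =>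
      rw [torusWalk_zero_zero, torusWalk_zero_zero]
      congr 1
      exact propext ⟨fun h => funext fun i => by simpa using congrFun h (τ.symm i),
        fun h => by simp [h]⟩
    | succ l ih =>
      rw [torusWalk_succ_right, torusWalk_succ_right]
      refine Fintype.sum_equiv τ _ _ fun i => ?_
      rw [← ih (v + Pi.single (τ i) 1)]
      congr 1
      ext j
      simp [Pi.single_apply]
  | succ k ih =>
    rw [torusWalk_succ_left, torusWalk_succ_left]
    refine Fintype.sum_equiv τ _ _ fun i => ?_
    rw [← ih (v - Pi.single (τ i) 1)]
    congr 1
    ext j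
    simp [Pi.single_apply]

lemma torusWalk_eq_zero_of_sum_ne (k l : ℕ) (v : Fin n → ℤ) (h : ∑ i, v i ≠ k - l) :
    torusWalk k l v = 0 := by
  induction k generalizing v with
  | zero =>
    induction l generalizing v with
    | zero =>
      rw [torusWalk_zero_zero, if_neg]
      rintro rfl
      simp at h
    | succ l ih =>
      rw [torusWalk_succ_right]
      refine Finset.sum_eq_zero fun i _ => ih _ ?_
      simp only [Pi.add_apply, Finset.sum_add_distrib, Fintype.sum_pi_single']
      push_cast at h ⊢
      omega
  | succ k ih =>
    rw [torusWalk_succ_left]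
    refine Finset.sum_eq_zero fun i _ => ih _ ?_
    simp only [Pi.sub_apply, Finset.sum_sub_distrib, Fintype.sum_pi_single']
    push_cast at h ⊢
    omega

lemma torusWalk_eq_zero_of_neg (k : ℕ) (v : Fin n → ℤ) (i : Fin n) (h : v i < 0) :
    torusWalk k 0 v = 0 := by
  induction k generalizing v with
  | zero =>
    rw [torusWalk_zero_zero, if_neg]
    rintro rfl
    simp at h
  | succ k ih =>
    rw [torusWalk_succ_left]
    refine Finset.sum_eq_zero fun j _ => ih _ ?_
    simp only [Pi.sub_apply, Pi.single_apply]
    split_ifs <;> omega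

/-- The alternating sum, over the Weyl group, of the numbers of walks from the images of
`(0, -1, …, -(n - 1))` to `x`. -/
noncomputable def alternant (k l : ℕ) (x : Fin n → ℤ) : ℂ :=
  ∑ σ : Equiv.Perm (Fin n), (Equiv.Perm.sign σ : ℂ) * torusWalk k l fun i => x i + (σ i : ℕ)

lemma alternant_succ_left (k l : ℕ) (x : Fin n → ℤ) :
    alternant (k + 1) l x = ∑ i, alternant k l (x - Pi.single i 1) := by
  simp only [alternant]
  rw [Finset.sum_comm]
  refine Finset.sum_congr rfl fun σ _ => ?_
  rw [torusWalk_succ_left, Finset.mul_sum]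
  refine Finset.sum_congr rfl fun i _ => ?_
  congr 2
  ext j
  simp only [Pi.sub_apply]
  ring

lemma alternant_succ_right (k l : ℕ) (x : Fin n → ℤ) :
    alternant k (l + 1) x = ∑ i, alternant k l (x + Pi.single i 1) := by
  simp only [alternant]
  rw [Finset.sum_comm]
  refine Finset.sum_congr rfl fun σ _ => ?_
  rw [torusWalk_succ_right, Finset.mul_sum]
  refine Finset.sum_congr rfl fun i _ => ?_
  congr 2
  ext j
  simp only [Pi.add_apply]
  ring

lemma alternant_eq_zero_of_eq (k l : ℕ) (x : Fin n → ℤ) {i j : Fin n} (hij : i ≠ j)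
    (h : x i = x j) : alternant k l x = 0 := by
  have hx : ∀ m, x (Equiv.swap i j m) = x m := fun m => by
    rcases eq_or_ne m i with rfl | hi
    · simp [h]
    rcases eq_or_ne m j with rfl | hj
    · simp [h]
    rw [Equiv.swap_apply_of_ne_of_ne hi hj]
  have key : alternant k l x = -alternant k l x := by
    conv_lhs => rw [alternant, ← Equiv.sum_comp (Equiv.mulRight (Equiv.swap i j))]
    rw [alternant, ← Finset.sum_neg_distrib]
    refine Finset.sum_congr rfl fun σ _ => ?_
    rw [← torusWalk_comp_perm (Equiv.swap i j) k l fun m => x m + (σ m : ℕ)]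
    simp only [Equiv.coe_mulRight, Equiv.Perm.sign_mul, Equiv.Perm.sign_swap hij,
      Function.comp_def, hx, Equiv.Perm.mul_apply]
    push_cast
    ring
  exact self_eq_neg.mp key

lemma alternant_eq_zero_of_le (k : ℕ) (x : Fin n → ℤ) (i : Fin n) (h : x i ≤ -n) :
    alternant k 0 x = 0 := by
  refine Finset.sum_eq_zero fun σ _ => ?_
  rw [torusWalk_eq_zero_of_neg k _ i, mul_zero]
  have := (σ i).isLt
  omega

lemma alternant_zero_zero (x : Fin n → ℤ) (hx : StrictAnti x) :
    alternant 0 0 x = if ∀ i, x i = -(i : ℕ) then 1 else 0 := by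
  rw [alternant, Finset.sum_eq_single 1]
  · simp only [Equiv.Perm.sign_one, torusWalk_zero_zero, funext_iff, Equiv.Perm.one_apply,
      Pi.zero_apply, eq_neg_iff_add_eq_zero]
    simp
  · intro σ _ hσ
    rw [torusWalk_zero_zero, if_neg, mul_zero]
    intro h0
    refine hσ ?_
    have hm : StrictMono σ := fun a b hab => by
      have h1 := congrFun h0 a
      have h2 := congrFun h0 b
      have h3 := hx hab
      simp only [Pi.zero_apply] at h1 h2
      rw [Fin.lt_def]
      omega
    have hid : (σ : Fin n → Fin n) = id := by
      have := Subsingleton.elim (hm.orderIsoOfSurjective σ σ.surjective) (OrderIso.refl _)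
      ext1 a
      exact congrArg (fun e : Fin n ≃o Fin n => e a) this
    ext1 a
    exact congrFun hid a
  · simp

lemma gesselDet_hasSum (lam : ℝ) (hlam : 0 < lam) (n : ℕ) :
    HasSum (fun N : ℕ => alternant N N (fun i : Fin n => -((i : ℕ) : ℤ)) * (lam : ℂ) ^ N /
      ((N.factorial : ℂ)) ^ 2) (gesselDet lam n) := by
  have h : HasSum (fun p : ℕ × ℕ => ∑ σ : Equiv.Perm (Fin n), (Equiv.Perm.sign σ : ℂ) *
      (((√lam : ℂ) ^ p.1 / (p.1.factorial : ℂ)) * ((√lam : ℂ) ^ p.2 / (p.2.factorial : ℂ)) *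
        torusWalk p.1 p.2 fun i => -((i : ℕ) : ℤ) + (σ i : ℕ))) (gesselDet lam n) := by
    rw [gesselDet, Matrix.det_apply']
    refine hasSum_sum fun σ _ => HasSum.mul_left _ ?_
    have := prod_gesselCoeff_hasSum lam fun i => -((i : ℕ) : ℤ) + (σ i : ℕ)
    simpa only [Matrix.of_apply, sub_eq_neg_add] using this
  have hinj : Function.Injective fun N : ℕ => (N, N) := fun a b hab => congrArg Prod.fst hab
  rw [← hinj.hasSum_iff] at h
  · refine (congrArg (HasSum · _) (funext fun N => ?_)).mp h
    have hs : (√lam : ℂ) * (√lam : ℂ) = lam := by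
      exact_mod_cast Real.mul_self_sqrt hlam.le
    simp only [Function.comp_apply, alternant, ← hs]
    rw [mul_div_assoc, Finset.sum_mul]
    refine Finset.sum_congr rfl fun σ _ => ?_
    ring
  · rintro ⟨k, l⟩ hkl
    refine Finset.sum_eq_zero fun σ _ => ?_
    rw [torusWalk_eq_zero_of_sum_ne, mul_zero, mul_zero]
    have hsum : ∑ i, ((σ i : ℕ) : ℤ) = ∑ i : Fin n, ((i : ℕ) : ℤ) :=
      Equiv.sum_comp σ fun i => ((i : ℕ) : ℤ)
    rw [Finset.sum_add_distrib, hsum, Finset.sum_neg_distrib, neg_add_cancel]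
    intro h0
    exact hkl ⟨k, by ext <;> simp; omega⟩

end Alternant

section Growth

/-- Integer partitions, as antitone sequences of row lengths that eventually vanish. -/
structure Shape where
  row : ℕ → ℕ
  anti : Antitone row
  eventually_zero : ∃ m, row m = 0

namespace Shape

lemma ext_row {a b : Shape} (h : ∀ m, a.row m = b.row m) : a = b := by
  cases a
  cases b
  congr
  exact funext h

/-- The partition of zero. -/
def empty : Shape := ⟨fun _ => 0, antitone_const, 0, rfl⟩

/-- `b` is obtained from `a` by adding a cell to row `i`. -/
def AddAt (a : Shape) (i : ℕ) (b : Shape) : Prop :=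
  ∀ m, b.row m = a.row m + if m = i then 1 else 0

/-- `b` is obtained from `a` by adding a cell. -/
def Covers (a b : Shape) : Prop := ∃ i, a.AddAt i b

/-- `b` is obtained from `a` by adding at most one cell. -/
def WeakStep (a b : Shape) : Prop := a = b ∨ a.Covers b

variable {a b c d : Shape} {i j k : ℕ}

lemma AddAt.row_self (h : a.AddAt i b) : b.row i = a.row i + 1 := by
  simpa using h i

lemma AddAt.row_of_ne (h : a.AddAt i b) {m : ℕ} (hm : m ≠ i) : b.row m = a.row m := by
  simpa [hm] using h m

lemma AddAt.le (h : a.AddAt i b) (m : ℕ) : a.row m ≤ b.row m := by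
  rw [h m]
  exact Nat.le_add_right _ _

lemma AddAt.ne (h : a.AddAt i b) : a ≠ b := by
  rintro rfl
  have := h.row_self
  omega

lemma AddAt.index_unique (h : a.AddAt i b) (h' : a.AddAt j b) : i = j := by
  by_contra hij
  have h1 := h.row_self
  have h2 := h'.row_of_ne hij
  omega

lemma AddAt.right_unique (h : a.AddAt i b) (h' : a.AddAt i c) : b = c :=
  ext_row fun m => by rw [h m, h' m]

lemma AddAt.left_unique (h : a.AddAt i c) (h' : b.AddAt i c) : a = b :=
  ext_row fun m => by
    have h1 := h m
    have h2 := h' m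
    omega

lemma AddAt.lt_of_lt (h : a.AddAt i b) {m : ℕ} (hm : m < i) : a.row i < a.row m := by
  have h1 := b.anti hm.le
  rw [h.row_self, h.row_of_ne hm.ne] at h1
  exact h1

lemma AddAt.row_succ_lt (h : a.AddAt i b) : b.row (i + 1) < b.row i := by
  have h1 := a.anti (Nat.le_succ i)
  rw [h.row_self, h.row_of_ne (Nat.succ_ne_self i)]
  exact Nat.lt_succ_of_le h1

lemma exists_addAt (a : Shape) (i : ℕ) (h : ∀ m < i, a.row i < a.row m) :
    ∃ b : Shape, a.AddAt i b := by
  obtain ⟨m, hm⟩ := a.eventually_zero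
  refine ⟨⟨fun m => a.row m + if m = i then 1 else 0, fun p q hpq => ?_, m + i + 1, ?_⟩,
    fun _ => rfl⟩
  · have h1 := a.anti hpq
    rcases eq_or_ne q i with rfl | hq
    · rcases hpq.eq_or_lt with rfl | hlt
      · exact le_rfl
      · have := h p hlt
        simp only [if_true]
        omega
    · simp only [hq, if_false]
      omega
  · have h1 := a.anti (show m ≤ m + i + 1 by omega)
    have h2 : m + i + 1 ≠ i := by omega
    simp only [h2, if_false]
    omega

lemma exists_addAt_left (b : Shape) (i : ℕ) (h : b.row (i + 1) < b.row i) :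
    ∃ a : Shape, a.AddAt i b := by
  obtain ⟨m, hm⟩ := b.eventually_zero
  refine ⟨⟨fun m => b.row m - if m = i then 1 else 0, fun p q hpq => ?_, m, by simp [hm]⟩,
    fun m => ?_⟩
  · have h1 := b.anti hpq
    rcases eq_or_ne p i with rfl | hp
    · rcases hpq.eq_or_lt with rfl | hlt
      · exact le_rfl
      · have := b.anti (show p + 1 ≤ q from hlt)
        simp only [if_true, hlt.ne', if_false]
        omega
    · simp only [hp, if_false]
      omega
  · rcases eq_or_ne m i with rfl | hm'
    · simp only [if_true]
      omega
    · simp [hm']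

/-- Fomin's local rule for the four corners of a cell of a growth diagram; `x` tells whether the
cell is marked. -/
inductive LocalRule (x : Prop) : Shape → Shape → Shape → Shape → Prop
  | right (hx : ¬x) (a c : Shape) : LocalRule x a a c c
  | left (hx : ¬x) (a b : Shape) : LocalRule x a b a b
  | diff (hx : ¬x) {a b c d : Shape} {i j : ℕ} (hij : i ≠ j) (hab : a.AddAt i b)
      (hac : a.AddAt j c) (hbd : b.AddAt j d) (hcd : c.AddAt i d) : LocalRule x a b c d
  | bump (hx : ¬x) {a b d : Shape} {i k : ℕ} (hab : a.AddAt i b) (hbd : b.AddAt k d)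
      (hk : b.row k = b.row i) : LocalRule x a b b d
  | mark (hx : x) {a d : Shape} {k : ℕ} (had : a.AddAt k d) (hk : a.row k = 0) :
      LocalRule x a a a d

lemma AddAt.eq_of_row_eq (h : a.AddAt i b) (h' : a.AddAt j c) (hij : a.row i = a.row j) :
    b = c := by
  have : i = j := by
    rcases lt_trichotomy i j with hlt | rfl | hlt
    · have := h'.lt_of_lt hlt
      omega
    · rfl
    · have := h.lt_of_lt hlt
      omega
  subst this
  exact h.right_unique h'

lemma LocalRule.right_unique {x : Prop} {d' : Shape} (h : LocalRule x a b c d)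
    (h' : LocalRule x a b c d') : d = d' := by
  cases h with
  | right hx =>
    cases h' with
    | right => rfl
    | left => rfl
    | diff _ _ hab => exact absurd rfl hab.ne
    | bump _ hab => exact absurd rfl hab.ne
    | mark hx' => exact absurd hx' hx
  | left hx =>
    cases h' with
    | right => rfl
    | left => rfl
    | diff _ _ _ hac => exact absurd rfl hac.ne
    | bump _ hab => exact absurd rfl hab.ne
    | mark hx' => exact absurd hx' hx
  | diff hx hij hab hac hbd hcd =>
    cases h' with
    | right => exact absurd rfl hab.ne
    | left => exact absurd rfl hac.ne
    | diff _ _ hab' hac' hbd' =>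
      rw [hac.index_unique hac'] at hbd
      exact hbd.right_unique hbd'
    | bump => exact absurd (hab.index_unique hac) hij
    | mark hx' => exact absurd hx' hx
  | bump hx hab hbd hk =>
    cases h' with
    | right => exact absurd rfl hab.ne
    | left => exact absurd rfl hab.ne
    | diff _ hij hab' hac' => exact absurd (hab'.index_unique hac') hij
    | bump _ hab' hbd' hk' =>
      rw [← hab.index_unique hab'] at hk'
      exact hbd.eq_of_row_eq hbd' (hk.trans hk'.symm)
    | mark hx' => exact absurd hx' hx
  | mark hx had hk =>
    cases h' with
    | right hx' => exact absurd hx hx'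
    | left hx' => exact absurd hx hx'
    | diff hx' => exact absurd hx hx'
    | bump hx' => exact absurd hx hx'
    | mark _ had' hk' => exact had.eq_of_row_eq had' (hk.trans hk'.symm)

lemma AddAt.eq_of_row_eq' (h : a.AddAt i c) (h' : b.AddAt j c) (hij : c.row i = c.row j) :
    a = b := by
  have : i = j := by
    rcases lt_trichotomy i j with hlt | rfl | hlt
    · have := c.anti (Nat.succ_le_of_lt hlt)
      have := h.row_succ_lt
      simp only [Nat.succ_eq_add_one] at *
      omega
    · rfl
    · have := c.anti (Nat.succ_le_of_lt hlt)
      have := h'.row_succ_lt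
      simp only [Nat.succ_eq_add_one] at *
      omega
  subst this
  exact h.left_unique h'

lemma LocalRule.left_unique {x x' : Prop} {a' : Shape} (h : LocalRule x a b c d)
    (h' : LocalRule x' a' b c d) : a = a' ∧ (x ↔ x') := by
  cases h with
  | right hx =>
    cases h' with
    | right hx' => exact ⟨rfl, iff_of_false hx hx'⟩
    | left hx' => exact ⟨rfl, iff_of_false hx hx'⟩
    | diff _ _ _ _ _ hcd => exact absurd rfl hcd.ne
    | bump _ _ hbd => exact absurd rfl hbd.ne
    | mark _ had => exact absurd rfl had.ne
  | left hx =>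
    cases h' with
    | right hx' => exact ⟨rfl, iff_of_false hx hx'⟩
    | left hx' => exact ⟨rfl, iff_of_false hx hx'⟩
    | diff _ _ _ _ hbd => exact absurd rfl hbd.ne
    | bump _ _ hbd => exact absurd rfl hbd.ne
    | mark _ had => exact absurd rfl had.ne
  | diff hx hij hab hac hbd hcd =>
    cases h' with
    | right => exact absurd rfl hcd.ne
    | left => exact absurd rfl hbd.ne
    | diff hx' _ hab' _ _ hcd' =>
      rw [hcd.index_unique hcd'] at hab
      exact ⟨hab.left_unique hab', iff_of_false hx hx'⟩
    | bump => exact absurd (hcd.index_unique hbd) hij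
    | mark => exact absurd (hcd.index_unique hbd) hij
  | bump hx hab hbd hk =>
    cases h' with
    | right => exact absurd rfl hbd.ne
    | left => exact absurd rfl hbd.ne
    | diff _ hij _ _ hbd' hcd' => exact absurd (hcd'.index_unique hbd') hij
    | bump hx' hab' hbd' hk' =>
      rw [← hbd.index_unique hbd'] at hk'
      exact ⟨hab.eq_of_row_eq' hab' (hk.symm.trans hk'), iff_of_false hx hx'⟩
    | mark _ had hk' =>
      rw [← hbd.index_unique had, hk, hab.row_self] at hk'
      exact absurd hk' (Nat.succ_ne_zero _)
  | mark hx had hk =>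
    cases h' with
    | right => exact absurd rfl had.ne
    | left => exact absurd rfl had.ne
    | diff _ hij _ _ hbd' hcd' => exact absurd (hcd'.index_unique hbd') hij
    | bump hx' hab' hbd' hk' =>
      rw [had.index_unique hbd', hk', hab'.row_self] at hk
      exact absurd hk (Nat.succ_ne_zero _)
    | mark hx' => exact ⟨rfl, iff_of_true hx hx'⟩

lemma exists_localRule_right {x : Prop} (hab : a.WeakStep b) (hac : a.WeakStep c)
    (hx : x → a = b ∧ a = c) : ∃ d, LocalRule x a b c d ∧ b.WeakStep d ∧ c.WeakStep d := by
  by_cases h : x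
  · obtain ⟨rfl, rfl⟩ := hx h
    classical
    have hk := Nat.find_spec a.eventually_zero
    obtain ⟨d, hd⟩ := a.exists_addAt (Nat.find a.eventually_zero) fun m hm => by
      rw [hk]
      exact Nat.pos_of_ne_zero (Nat.find_min a.eventually_zero hm)
    exact ⟨d, .mark h hd hk, .inr ⟨_, hd⟩, .inr ⟨_, hd⟩⟩
  rcases hab with rfl | ⟨i, hi⟩
  · exact ⟨c, .right h _ _, hac, .inl rfl⟩
  rcases hac with rfl | ⟨j, hj⟩
  · exact ⟨b, .left h _ _, .inl rfl, .inr ⟨i, hi⟩⟩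
  rcases eq_or_ne i j with rfl | hij
  · obtain rfl := hi.right_unique hj
    classical
    have hex : ∃ k, b.row k = b.row i := ⟨i, rfl⟩
    have hk := Nat.find_spec hex
    obtain ⟨d, hd⟩ := b.exists_addAt (Nat.find hex) fun m hm => by
      have h1 := Nat.find_min hex hm
      have h2 := b.anti hm.le
      omega
    exact ⟨d, .bump h hi hd hk, .inr ⟨_, hd⟩, .inr ⟨_, hd⟩⟩
  · obtain ⟨d, hd⟩ := b.exists_addAt j fun m hm => by
      rw [hi.row_of_ne hij.symm]
      exact (hj.lt_of_lt hm).trans_le (hi.le m)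
    have hcd : c.AddAt i d := fun m => by
      rw [hd m, hj m, hi m]
      omega
    exact ⟨d, .diff h hij hi hj hd hcd, .inr ⟨_, hd⟩, .inr ⟨_, hcd⟩⟩

lemma exists_localRule_left (hbd : b.WeakStep d) (hcd : c.WeakStep d) :
    ∃ a x, LocalRule x a b c d ∧ a.WeakStep b ∧ a.WeakStep c := by
  rcases hbd with rfl | ⟨j, hj⟩
  · exact ⟨c, False, .left id _ _, hcd, .inl rfl⟩
  rcases hcd with rfl | ⟨i, hi⟩
  · exact ⟨b, False, .right id _ _, .inl rfl, .inr ⟨j, hj⟩⟩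
  rcases eq_or_ne i j with rfl | hij
  · obtain rfl := hi.left_unique hj
    rcases Nat.eq_zero_or_pos (c.row i) with h0 | hpos
    · exact ⟨c, True, .mark trivial hi h0, .inl rfl, .inl rfl⟩
    classical
    have hex : ∃ k, c.row (k + 1) < c.row i := by
      obtain ⟨m, hm⟩ := c.eventually_zero
      have := c.anti (Nat.le_succ m)
      exact ⟨m, by simp only [Nat.succ_eq_add_one] at *; omega⟩
    have hk := Nat.find_spec hex
    have hik : i ≤ Nat.find hex := by
      by_contra! hlt
      have := c.anti (Nat.succ_le_of_lt hlt)
      simp only [Nat.succ_eq_add_one] at *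
      omega
    have hrow : c.row i = c.row (Nat.find hex) := by
      refine le_antisymm ?_ (c.anti hik)
      rcases Nat.eq_zero_or_pos (Nat.find hex) with h0 | hp
      · rw [h0]
        rw [h0] at hik
        exact c.anti (Nat.zero_le _)
      · have := Nat.find_min hex (m := Nat.find hex - 1) (by omega)
        rwa [Nat.sub_add_cancel hp, not_lt] at this
    obtain ⟨a, ha⟩ := c.exists_addAt_left (Nat.find hex) (hk.trans_eq hrow)
    exact ⟨a, False, .bump id ha hi hrow, .inr ⟨_, ha⟩, .inr ⟨_, ha⟩⟩
  · obtain ⟨a, ha⟩ := b.exists_addAt_left i (by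
      rw [← hj.row_of_ne hij]
      exact (hj.le _).trans_lt hi.row_succ_lt)
    have hac : a.AddAt j c := fun m => by
      have h1 := ha m
      have h2 := hj m
      have h3 := hi m
      omega
    exact ⟨a, False, .diff id hij ha hac hj hi, .inr ⟨_, ha⟩, .inr ⟨_, hac⟩⟩

lemma LocalRule.eq_iff_left {x : Prop} (h : LocalRule x a b c d) : b = d ↔ a = c ∧ ¬x := by
  cases h with
  | right hx => exact ⟨fun h => ⟨h, hx⟩, fun h => h.1⟩
  | left hx => simp [hx]
  | diff hx hij hab hac hbd hcd => exact iff_of_false hbd.ne fun h => hac.ne h.1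
  | bump hx hab hbd hk => exact iff_of_false hbd.ne fun h => hab.ne h.1
  | mark hx had hk => exact iff_of_false had.ne fun h => h.2 hx

lemma LocalRule.eq_iff_right {x : Prop} (h : LocalRule x a b c d) : c = d ↔ a = b ∧ ¬x := by
  cases h with
  | right hx => simp [hx]
  | left hx => exact ⟨fun h => ⟨h, hx⟩, fun h => h.1⟩
  | diff hx hij hab hac hbd hcd => exact iff_of_false hcd.ne fun h => hab.ne h.1
  | bump hx hab hbd hk => exact iff_of_false hbd.ne fun h => hab.ne h.1
  | mark hx had hk => exact iff_of_false had.ne fun h => h.2 hx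

lemma LocalRule.eq_of_mark {x : Prop} (h : LocalRule x a b c d) (hx : x) : a = b ∧ a = c := by
  cases h with
  | right hx' => exact absurd hx hx'
  | left hx' => exact absurd hx hx'
  | diff hx' => exact absurd hx hx'
  | bump hx' => exact absurd hx hx'
  | mark hx had hk => exact ⟨rfl, rfl⟩

lemma LocalRule.row_eq_zero_iff {x : Prop} (h : LocalRule x a b c d) (hx : ¬x)
    (hab : a.WeakStep b) (hac : a.WeakStep c) (m : ℕ) :
    d.row m = 0 ↔ b.row m = 0 ∧ c.row m = 0 := by
  have hle : ∀ {a b : Shape}, a.WeakStep b → a.row m ≤ b.row m := by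
    rintro a b (rfl | ⟨i, hi⟩)
    exacts [le_rfl, hi.le m]
  cases h with
  | right => have := hle hac; omega
  | left => have := hle hab; omega
  | diff hx hij hab hac hbd hcd =>
    have h1 := hab m
    have h2 := hac m
    have h3 := hbd m
    have h4 := hcd m
    split_ifs at * <;> omega
  | @bump _ _ _ _ i k hab hbd hk =>
    have h2 := hab.row_self
    rcases eq_or_ne m k with rfl | hm
    · rw [hbd.row_self]
      omega
    · rw [hbd.row_of_ne hm, and_self]
  | mark hx' => exact absurd hx' hx

lemma LocalRule.row_succ_eq_zero_iff {x : Prop} (h : LocalRule x a b c d) (hx : x) (m : ℕ) :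
    d.row (m + 1) = 0 ↔ a.row m = 0 := by
  cases h with
  | right hx' => exact absurd hx hx'
  | left hx' => exact absurd hx hx'
  | diff hx' => exact absurd hx hx'
  | bump hx' => exact absurd hx hx'
  | @mark _ _ _ k had hk =>
    rcases lt_trichotomy (m + 1) k with hlt | rfl | hlt
    · have h1 := had.lt_of_lt hlt
      have h2 := had.lt_of_lt (show m < k by omega)
      rw [had.row_of_ne hlt.ne]
      omega
    · have h2 := had.lt_of_lt (Nat.lt_succ_self m)
      rw [had.row_self]
      omega
    · rw [had.row_of_ne hlt.ne']
      have h1 := a.anti (show k ≤ m by omega)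
      have h2 := a.anti (show k ≤ m + 1 by omega)
      omega

lemma LocalRule.row_zero_pos {x : Prop} (h : LocalRule x a b c d) (hx : x) : 0 < d.row 0 := by
  cases h with
  | right hx' => exact absurd hx hx'
  | left hx' => exact absurd hx hx'
  | diff hx' => exact absurd hx hx'
  | bump hx' => exact absurd hx hx'
  | @mark _ _ _ k had hk =>
    have h1 := d.anti (Nat.zero_le k)
    rw [had.row_self] at h1
    omega

end Shape

/-- Fill a quadrant from its two boundary lines by a recursion on cells. -/
def fillGrid {S : Type*} (f : ℕ → ℕ → S → S → S → S) (bot left : ℕ → S) : ℕ → ℕ → S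
  | 0, j => bot j
  | i + 1, 0 => left (i + 1)
  | i + 1, j + 1 => f i j (fillGrid f bot left i j) (fillGrid f bot left (i + 1) j)
      (fillGrid f bot left i (j + 1))

lemma exists_grid {S : Type*} (H V : ℕ → ℕ → S → S → Prop)
    (L : ℕ → ℕ → S → S → S → S → Prop) (bot left : ℕ → S) (h0 : bot 0 = left 0)
    (hV : ∀ j, V 0 j (bot j) (bot (j + 1))) (hH : ∀ i, H i 0 (left i) (left (i + 1)))
    (step : ∀ i j a b c, H i j a b → V i j a c →
      ∃ d, L i j a b c d ∧ V (i + 1) j b d ∧ H i (j + 1) c d) :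
    ∃ G : ℕ → ℕ → S, (∀ j, G 0 j = bot j) ∧ (∀ i, G i 0 = left i) ∧
      ∀ i j, H i j (G i j) (G (i + 1) j) ∧ V i j (G i j) (G i (j + 1)) ∧
        L i j (G i j) (G (i + 1) j) (G i (j + 1)) (G (i + 1) (j + 1)) := by
  have : Nonempty S := ⟨bot 0⟩
  choose! f hf using step
  have hleft : ∀ i, fillGrid f bot left i 0 = left i := fun i => by
    cases i with
    | zero => rw [fillGrid, h0]
    | succ i => rw [fillGrid]
  have key : ∀ i, (∀ j, V i j (fillGrid f bot left i j) (fillGrid f bot left i (j + 1))) →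
      ∀ j, H i j (fillGrid f bot left i j) (fillGrid f bot left (i + 1) j) := by
    intro i hi j
    induction j with
    | zero => rw [hleft, hleft]; exact hH i
    | succ j ih =>
      rw [fillGrid]
      exact (hf _ _ _ _ _ ih (hi j)).2.2
  have hv : ∀ i j, V i j (fillGrid f bot left i j) (fillGrid f bot left i (j + 1)) := by
    intro i
    induction i with
    | zero => intro j; rw [fillGrid, fillGrid]; exact hV j
    | succ i ih =>
      intro j
      conv => arg 4; rw [fillGrid]
      exact (hf _ _ _ _ _ (key i ih j) (ih j)).2.1
  refine ⟨fillGrid f bot left, fun j => by rw [fillGrid], hleft,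
    fun i j => ⟨key i (hv i) j, hv i j, ?_⟩⟩
  conv => arg 6; rw [fillGrid]
  exact (hf _ _ _ _ _ (key i (hv i) j) (hv i j)).1

/-- `G` is the growth diagram of the marking `X` of the cells of the quadrant. -/
structure IsGrowth (X : ℕ → ℕ → Prop) (G : ℕ → ℕ → Shape) : Prop where
  bot : ∀ j, G 0 j = Shape.empty
  left : ∀ i, G i 0 = Shape.empty
  hstep : ∀ i j, (G i j).WeakStep (G (i + 1) j)
  vstep : ∀ i j, (G i j).WeakStep (G i (j + 1))
  rule : ∀ i j, Shape.LocalRule (X i j) (G i j) (G (i + 1) j) (G i (j + 1)) (G (i + 1) (j + 1))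

namespace IsGrowth

variable {X X' : ℕ → ℕ → Prop} {G G' : ℕ → ℕ → Shape}

lemma hstep_eq_iff (h : IsGrowth X G) (i j : ℕ) :
    G i j = G (i + 1) j ↔ ∀ j' < j, ¬X i j' := by
  induction j with
  | zero => simp [h.left]
  | succ j ih => rw [(h.rule i j).eq_iff_right, ih, Nat.forall_lt_succ_right]

lemma vstep_eq_iff (h : IsGrowth X G) (i j : ℕ) :
    G i j = G i (j + 1) ↔ ∀ i' < i, ¬X i' j := by
  induction i with
  | zero => simp [h.bot]
  | succ i ih => rw [(h.rule i j).eq_iff_left, ih, Nat.forall_lt_succ_right]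

lemma unique (h : IsGrowth X G) (h' : IsGrowth X G') (i j : ℕ) : G i j = G' i j := by
  induction i generalizing j with
  | zero => rw [h.bot, h'.bot]
  | succ i ih =>
    induction j with
    | zero => rw [h.left, h'.left]
    | succ j ihj =>
      have h1 := h.rule i j
      rw [ih j, ih (j + 1), ihj] at h1
      exact h1.right_unique (h'.rule i j)

lemma eq_of_boundary_eq {N : ℕ} (h : IsGrowth X G) (h' : IsGrowth X' G')
    (hr : ∀ i ≤ N, G i N = G' i N) (ht : ∀ j ≤ N, G N j = G' N j) {i j : ℕ} (hi : i ≤ N)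
    (hj : j ≤ N) : G i j = G' i j := by
  induction hi using Nat.decreasingInduction generalizing j with
  | self => exact ht j hj
  | of_succ i hi ih =>
    induction hj using Nat.decreasingInduction with
    | self => exact hr i hi.le
    | of_succ j hj ihj =>
      have h1 := h.rule i j
      rw [ih hj.le, ih hj, ihj] at h1
      exact (h1.left_unique (h'.rule i j)).1

lemma mark_iff_of_boundary_eq {N : ℕ} (h : IsGrowth X G) (h' : IsGrowth X' G')
    (hr : ∀ i ≤ N, G i N = G' i N) (ht : ∀ j ≤ N, G N j = G' N j) {i j : ℕ} (hi : i < N)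
    (hj : j < N) : X i j ↔ X' i j := by
  have h1 := h.rule i j
  rw [h.eq_of_boundary_eq h' hr ht hi.le hj, h.eq_of_boundary_eq h' hr ht hi hj.le,
    h.eq_of_boundary_eq h' hr ht hi hj] at h1
  exact (h1.left_unique (h'.rule i j)).2

lemma exists_of_partial_perm (hX : ∀ i j j', X i j → X i j' → j = j')
    (hX' : ∀ i i' j, X i j → X i' j → i = i') : ∃ G, IsGrowth X G := by
  obtain ⟨G, hbot, hleft, hG⟩ := exists_grid
    (fun i j a b => a.WeakStep b ∧ (a = b ↔ ∀ j' < j, ¬X i j'))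
    (fun i j a b => a.WeakStep b ∧ (a = b ↔ ∀ i' < i, ¬X i' j))
    (fun i j => Shape.LocalRule (X i j)) (fun _ => Shape.empty) (fun _ => Shape.empty) rfl
    (fun j => ⟨.inl rfl, by simp⟩) (fun i => ⟨.inl rfl, by simp⟩) (by
      rintro i j a b c ⟨hab, hab'⟩ ⟨hac, hac'⟩
      obtain ⟨d, hd, hbd, hcd⟩ := Shape.exists_localRule_right (x := X i j) hab hac fun hx =>
        ⟨hab'.mpr fun j' hj' hx' => hj'.ne (hX _ _ _ hx' hx),
          hac'.mpr fun i' hi' hx' => hi'.ne (hX' _ _ _ hx' hx)⟩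
      refine ⟨d, hd, ⟨hbd, ?_⟩, ⟨hcd, ?_⟩⟩
      · rw [hd.eq_iff_left, hac', Nat.forall_lt_succ_right]
      · rw [hd.eq_iff_right, hab', Nat.forall_lt_succ_right])
  exact ⟨G, hbot, hleft, fun i j => (hG i j).1.1, fun i j => (hG i j).2.1.1,
    fun i j => (hG i j).2.2⟩

end IsGrowth

/-- The permutation matrix of `σ`, as a marking of the cells of the quadrant. -/
def permMark {N : ℕ} (σ : Equiv.Perm (Fin N)) (i j : ℕ) : Prop := ∃ h : i < N, σ ⟨i, h⟩ = j

lemma exists_growth_permMark {N : ℕ} (σ : Equiv.Perm (Fin N)) : ∃ G, IsGrowth (permMark σ) G := by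
  refine IsGrowth.exists_of_partial_perm ?_ ?_
  · rintro i j j' ⟨h, hj⟩ ⟨_, hj'⟩
    exact hj.symm.trans hj'
  · rintro i i' j ⟨h, hj⟩ ⟨h', hj'⟩
    have := σ.injective (Fin.ext (hj.trans hj'.symm))
    exact congrArg Fin.val this

/-- Schensted's theorem: the number of rows in the growth diagram is the length of the longest
increasing subsequence. -/
lemma IsGrowth.row_eq_zero_iff {N : ℕ} {σ : Equiv.Perm (Fin N)} {G : ℕ → ℕ → Shape}
    (h : IsGrowth (permMark σ) G) (i j m : ℕ) :
    (G i j).row m = 0 ↔ ∀ s : Finset (Fin N), (∀ a ∈ s, (a : ℕ) < i ∧ (σ a : ℕ) < j) →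
      StrictMonoOn σ s → s.card ≤ m := by
  induction i generalizing j m with
  | zero =>
    rw [h.bot]
    refine iff_of_true rfl fun s hs _ => ?_
    rw [Finset.eq_empty_of_forall_notMem fun a ha => Nat.not_lt_zero _ (hs a ha).1]
    exact Nat.zero_le _
  | succ i ihi =>
    induction j generalizing m with
    | zero =>
      rw [h.left]
      refine iff_of_true rfl fun s hs _ => ?_
      rw [Finset.eq_empty_of_forall_notMem fun a ha => Nat.not_lt_zero _ (hs a ha).2]
      exact Nat.zero_le _
    | succ j ihj =>
      by_cases hx : permMark σ i j
      · obtain ⟨hiN, hσ⟩ := id hx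
        have hmem : ∀ a : Fin N, a ≠ ⟨i, hiN⟩ → (σ a : ℕ) ≠ j := fun a ha hσa =>
          ha (σ.injective (Fin.ext (hσa.trans hσ.symm)))
        rcases m with _ | m
        · refine iff_of_false ((h.rule i j).row_zero_pos hx).ne' fun hs => ?_
          have := hs {⟨i, hiN⟩} (fun a ha => by
            rw [Finset.mem_singleton.mp ha, hσ]
            exact ⟨Nat.lt_succ_self _, Nat.lt_succ_self _⟩) (by simp)
          simp at this
        · rw [(h.rule i j).row_succ_eq_zero_iff hx, ihi]
          constructor
          · intro hs s hsb hmono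
            have := hs (s.erase ⟨i, hiN⟩) (fun a ha => by
              obtain ⟨hne, ha⟩ := Finset.mem_erase.mp ha
              have h1 := hsb a ha
              have h2 := hmem a hne
              have h3 : (a : ℕ) ≠ i := fun h => hne (Fin.ext h)
              omega) (hmono.mono (by simp))
            have := Finset.pred_card_le_card_erase (s := s) (a := ⟨i, hiN⟩)
            omega
          · intro hs s hsb hmono
            have hnot : (⟨i, hiN⟩ : Fin N) ∉ s := fun hmem => (hsb _ hmem).1.ne rfl
            have := hs (insert ⟨i, hiN⟩ s) (fun a ha => by
              rcases Finset.mem_insert.mp ha with rfl | ha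
              · rw [hσ]
                exact ⟨Nat.lt_succ_self _, Nat.lt_succ_self _⟩
              · have := hsb a ha
                omega) (fun a ha b hb hab => by
              rw [Finset.mem_coe, Finset.mem_insert] at ha hb
              rcases ha with rfl | ha
              · rcases hb with rfl | hb
                · exact absurd hab (lt_irrefl _)
                · exact absurd (Fin.lt_def.mp hab) (hsb b hb).1.le.not_gt
              · rcases hb with rfl | hb
                · rw [Fin.lt_def, hσ]
                  exact (hsb a ha).2
                · exact hmono ha hb hab)
            rw [Finset.card_insert_of_notMem hnot] at this
            omega
      · rw [(h.rule i j).row_eq_zero_iff hx (h.hstep i j) (h.vstep i j), ihj, ihi]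
        constructor
        · rintro ⟨h1, h2⟩ s hsb hmono
          by_cases hi : ∃ hiN : i < N, (⟨i, hiN⟩ : Fin N) ∈ s
          · obtain ⟨hiN, hi⟩ := hi
            have hσi : (σ ⟨i, hiN⟩ : ℕ) < j := by
              have := (hsb _ hi).2
              have : (σ ⟨i, hiN⟩ : ℕ) ≠ j := fun h => hx ⟨hiN, h⟩
              omega
            refine h1 s (fun a ha => ⟨(hsb a ha).1, ?_⟩) hmono
            have ha' : a ≤ ⟨i, hiN⟩ := Fin.le_def.mpr (Nat.lt_succ_iff.mp (hsb a ha).1)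
            exact (Fin.le_def.mp (hmono.monotoneOn ha hi ha')).trans_lt hσi
          · refine h2 s (fun a ha => ⟨?_, (hsb a ha).2⟩) hmono
            refine (Nat.lt_succ_iff.mp (hsb a ha).1).lt_of_ne fun hai => hi ?_
            subst hai
            exact ⟨a.isLt, ha⟩
        · intro hs
          refine ⟨fun s hsb hmono => hs s (fun a ha => ?_) hmono,
            fun s hsb hmono => hs s (fun a ha => ?_) hmono⟩ <;>
          · have := hsb a ha
            omega

/-- Walks in Young's lattice restricted to at most `n` rows, starting at the empty partition, with
`M` steps, the first `N` of which go up and the others down, and constant equal to `c` from time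
`M` on. -/
structure IsWalk (n N M : ℕ) (c : Shape) (w : ℕ → Shape) : Prop where
  start : w 0 = Shape.empty
  row_eq_zero : ∀ t, (w t).row n = 0
  up : ∀ t < M, t < N → (w t).Covers (w (t + 1))
  down : ∀ t < M, N ≤ t → (w (t + 1)).Covers (w t)
  const : ∀ t, M ≤ t → w t = c

/-- The walk along the upper boundary, then the right boundary, of a growth diagram. -/
def boundaryWalk (N : ℕ) (G : ℕ → ℕ → Shape) (t : ℕ) : Shape :=
  if t ≤ N then G N t else G (2 * N - t) N

lemma boundaryWalk_of_le {N t : ℕ} (G : ℕ → ℕ → Shape) (h : t ≤ N) :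
    boundaryWalk N G t = G N t := if_pos h

lemma boundaryWalk_of_ge {N t : ℕ} (G : ℕ → ℕ → Shape) (h : N ≤ t) :
    boundaryWalk N G t = G (2 * N - t) N := by
  rcases h.eq_or_lt with rfl | h
  · rw [boundaryWalk_of_le G le_rfl]
    congr
    omega
  · exact if_neg h.not_ge

lemma Shape.covers_of_weakStep_of_ne {a b : Shape} (h : a.WeakStep b) (hne : a ≠ b) :
    a.Covers b := h.resolve_left hne

lemma Shape.WeakStep.eq_empty {a : Shape} (h : a.WeakStep Shape.empty) : a = Shape.empty := by
  rcases h with h | ⟨i, hi⟩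
  · exact h
  · exact absurd hi.row_self (Nat.succ_ne_zero _).symm

lemma IsGrowth.isWalk_boundaryWalk {n N : ℕ} {σ : Equiv.Perm (Fin N)} {G : ℕ → ℕ → Shape}
    (h : IsGrowth (permMark σ) G)
    (hσ : ∀ s : Finset (Fin N), StrictMonoOn σ ↑s → s.card ≤ n) :
    IsWalk n N (2 * N) Shape.empty (boundaryWalk N G) where
  start := by rw [boundaryWalk_of_le G (Nat.zero_le _), h.left]
  row_eq_zero t := by
    have hG : ∀ i j, (G i j).row n = 0 := fun i j =>
      (h.row_eq_zero_iff i j n).mpr fun s _ hs => hσ s hs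
    unfold boundaryWalk
    split_ifs <;> exact hG _ _
  up t _ ht := by
    rw [boundaryWalk_of_le G ht.le, boundaryWalk_of_le G ht]
    refine Shape.covers_of_weakStep_of_ne (h.vstep _ _) fun he => ?_
    refine (h.vstep_eq_iff N t).mp he (σ.symm ⟨t, ht⟩) (Fin.isLt _) ⟨Fin.isLt _, ?_⟩
    simp
  down t ht htN := by
    rw [boundaryWalk_of_ge G htN, boundaryWalk_of_ge G (htN.trans (Nat.le_succ t))]
    have hi : 2 * N - t = 2 * N - (t + 1) + 1 := by omega
    rw [hi]
    refine Shape.covers_of_weakStep_of_ne (h.hstep _ _) fun he => ?_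
    have hlt : 2 * N - (t + 1) < N := by omega
    exact (h.hstep_eq_iff _ N).mp he (σ ⟨_, hlt⟩) (Fin.isLt _) ⟨hlt, rfl⟩
  const t ht := by
    rw [boundaryWalk_of_ge G (by omega), Nat.sub_eq_zero_of_le ht, h.bot]

/-- A walk determines a growth diagram by filling from the upper right corner. -/
lemma IsWalk.exists_growth {n N : ℕ} {w : ℕ → Shape} (hw : IsWalk n N (2 * N) Shape.empty w) :
    ∃ (X : ℕ → ℕ → Prop) (G : ℕ → ℕ → Shape), IsGrowth X G ∧
      (∀ i j, X i j → i < N ∧ j < N) ∧ boundaryWalk N G = w := by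
  obtain ⟨K, hbot, hleft, hK⟩ := exists_grid
    (fun _ _ d c => c.WeakStep d) (fun _ _ d b => b.WeakStep d)
    (fun _ _ d c b a => ∃ x, Shape.LocalRule x a b c d) (fun j => w (N - j)) (fun i => w (N + i))
    rfl (fun j => by
      rcases lt_or_ge j N with hj | hj
      · have := hw.up (N - (j + 1)) (by omega) (by omega)
        rw [show N - (j + 1) + 1 = N - j by omega] at this
        exact .inr this
      · rw [Nat.sub_eq_zero_of_le hj, Nat.sub_eq_zero_of_le (hj.trans (Nat.le_succ j))]
        exact .inl rfl) (fun i => by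
      rcases lt_or_ge i N with hi | hi
      · exact .inr (hw.down (N + i) (by omega) (by omega))
      · rw [hw.const (N + i) (by omega), hw.const (N + (i + 1)) (by omega)]
        exact .inl rfl) (by
      intro i j d c b hcd hbd
      obtain ⟨a, x, h, hab, hac⟩ := Shape.exists_localRule_left hbd hcd
      exact ⟨a, ⟨x, h⟩, hac, hab⟩)
  choose hH hV x hx using hK
  have hKN : ∀ j, K N j = Shape.empty := fun j => by
    induction j with
    | zero => rw [hleft, hw.const _ (by omega)]
    | succ j ih => exact (ih ▸ hV N j).eq_empty
  have hKN' : ∀ i, K i N = Shape.empty := fun i => by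
    induction i with
    | zero => rw [hbot, Nat.sub_self, hw.start]
    | succ i ih => exact (ih ▸ hH i N).eq_empty
  refine ⟨fun i j => i < N ∧ j < N ∧ x (N - (i + 1)) (N - (j + 1)),
    fun i j => K (N - i) (N - j), ⟨fun j => hKN _, fun i => hKN' _, fun i j => ?_, fun i j => ?_,
      fun i j => ?_⟩, fun i j h => ⟨h.1, h.2.1⟩, funext fun t => ?_⟩
  · rcases lt_or_ge i N with hi | hi
    · have := hH (N - (i + 1)) (N - j)
      rwa [show N - (i + 1) + 1 = N - i by omega] at this
    · rw [Nat.sub_eq_zero_of_le hi, Nat.sub_eq_zero_of_le (hi.trans (Nat.le_succ i))]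
      exact .inl rfl
  · rcases lt_or_ge j N with hj | hj
    · have := hV (N - i) (N - (j + 1))
      rwa [show N - (j + 1) + 1 = N - j by omega] at this
    · rw [Nat.sub_eq_zero_of_le hj, Nat.sub_eq_zero_of_le (hj.trans (Nat.le_succ j))]
      exact .inl rfl
  · rcases lt_or_ge i N with hi | hi
    · rcases lt_or_ge j N with hj | hj
      · have := hx (N - (i + 1)) (N - (j + 1))
        rw [show N - (i + 1) + 1 = N - i by omega, show N - (j + 1) + 1 = N - j by omega] at this
        simpa only [hi, hj, true_and] using this
      · rw [Nat.sub_eq_zero_of_le hj, Nat.sub_eq_zero_of_le (hj.trans (Nat.le_succ j))]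
        exact .left (fun h => hj.not_gt h.2.1) _ _
    · rw [Nat.sub_eq_zero_of_le hi, Nat.sub_eq_zero_of_le (hi.trans (Nat.le_succ i))]
      exact .right (fun h => hi.not_gt h.1) _ _
  · rcases le_total t N with ht | ht
    · rw [boundaryWalk_of_le _ ht, Nat.sub_self, hbot]
      congr
      omega
    · rw [boundaryWalk_of_ge _ ht, Nat.sub_self, hleft]
      rcases le_total t (2 * N) with ht' | ht'
      · congr
        omega
      · rw [hw.const _ ht', hw.const _ (by omega)]

lemma exists_perm_of_isWalk {n N : ℕ} {w : ℕ → Shape} (hw : IsWalk n N (2 * N) Shape.empty w) :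
    ∃ (σ : Equiv.Perm (Fin N)) (G : ℕ → ℕ → Shape), IsGrowth (permMark σ) G ∧
      boundaryWalk N G = w := by
  obtain ⟨X, G, hG, hX, rfl⟩ := hw.exists_growth
  have hrow : ∀ i : Fin N, ∃ j : Fin N, X i j := fun i => by
    have hi := i.isLt
    have hd := hw.down (2 * N - (i + 1)) (by omega) (by omega)
    rw [boundaryWalk_of_ge G (by omega), boundaryWalk_of_ge G (by omega),
      show 2 * N - (2 * N - (i + 1)) = (i : ℕ) + 1 by omega,
      show 2 * N - (2 * N - (i + 1) + 1) = (i : ℕ) by omega] at hd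
    obtain ⟨k, hk⟩ := hd
    have := mt (hG.hstep_eq_iff i N).mpr hk.ne
    push Not at this
    obtain ⟨j, hj, hij⟩ := this
    exact ⟨⟨j, hj⟩, hij⟩
  have hR : ∀ i j j', X i j → X i j' → ¬j' < j := fun i j j' h h' hlt =>
    (hG.hstep_eq_iff i j).mp ((hG.rule i j).eq_of_mark h).1 j' hlt h'
  have hC : ∀ i i' j, X i j → X i' j → ¬i' < i := fun i i' j h h' hlt =>
    (hG.vstep_eq_iff i j).mp ((hG.rule i j).eq_of_mark h).2 i' hlt h'
  choose f hf using hrow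
  have hinj : Function.Injective f := fun i i' h => by
    have h1 := hf i
    have h2 := hf i'
    rw [h] at h1
    exact Fin.ext (le_antisymm (not_lt.mp (hC _ _ _ h1 h2)) (not_lt.mp (hC _ _ _ h2 h1)))
  have hmark : permMark (Equiv.ofBijective f (Finite.injective_iff_bijective.mp hinj)) = X := by
    ext i j
    constructor
    · rintro ⟨hi, rfl⟩
      exact hf ⟨i, hi⟩
    · intro h
      have hi := (hX i j h).1
      have h' := hf ⟨i, hi⟩
      exact ⟨hi, le_antisymm (not_lt.mp (hR _ _ _ h' h)) (not_lt.mp (hR _ _ _ h h'))⟩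
  exact ⟨_, G, hmark ▸ hG, rfl⟩

/-- The Robinson-Schensted correspondence for permutations without long increasing
subsequences. -/
theorem permCount_eq_card_walk (n N : ℕ) :
    permCount n N = Nat.card {w : ℕ → Shape // IsWalk n N (2 * N) Shape.empty w} := by
  choose G hG using @exists_growth_permMark N
  refine Nat.card_eq_of_bijective
    (fun σ => ⟨boundaryWalk N (G σ.1), (hG σ.1).isWalk_boundaryWalk σ.2⟩) ⟨?_, ?_⟩
  · rintro ⟨σ, _⟩ ⟨σ', _⟩ h
    have h := congrFun (congrArg Subtype.val h)
    simp only at h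
    refine Subtype.ext (Equiv.ext fun i => ?_)
    have key := (hG σ).mark_iff_of_boundary_eq (hG σ') (N := N) (fun i hi => ?_) (fun j hj => ?_)
      i.isLt (σ i).isLt
    · obtain ⟨_, h'⟩ := key.mp ⟨i.isLt, rfl⟩
      exact (Fin.ext h').symm
    · have := h (2 * N - i)
      rwa [boundaryWalk_of_ge _ (by omega), boundaryWalk_of_ge _ (by omega),
        show 2 * N - (2 * N - i) = i by omega] at this
    · have := h j
      rwa [boundaryWalk_of_le _ hj, boundaryWalk_of_le _ hj] at this
  · rintro ⟨w, hw⟩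
    obtain ⟨σ, G', hG', rfl⟩ := exists_perm_of_isWalk hw
    have hGG' : G σ = G' := funext₂ fun i j => (hG σ).unique hG' i j
    refine ⟨⟨σ, fun s hs => ?_⟩, Subtype.ext (congrArg (boundaryWalk N) hGG')⟩
    refine (hG'.row_eq_zero_iff N N n).mp ?_ s (fun a _ => ⟨a.isLt, (σ a).isLt⟩) hs
    have := hw.row_eq_zero N
    rwa [boundaryWalk_of_le _ le_rfl] at this

end Growth

section WalkCount

/-- The shifted row lengths of a partition. -/
def Shape.coord (n : ℕ) (c : Shape) (i : Fin n) : ℤ := (c.row i : ℤ) - i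

lemma Shape.strictAnti_coord (n : ℕ) (c : Shape) : StrictAnti (c.coord n) := fun i j hij => by
  have h1 := c.anti (show (i : ℕ) ≤ j from hij.le)
  have h2 : (i : ℕ) < j := hij
  simp only [Shape.coord]
  omega

lemma Shape.coord_empty (n : ℕ) : Shape.empty.coord n = fun i : Fin n => -((i : ℕ) : ℤ) := by
  ext i
  simp [Shape.coord, Shape.empty]

lemma Shape.AddAt.coord_eq {n : ℕ} {a b : Shape} {i : Fin n} (h : a.AddAt i b) :
    b.coord n = a.coord n + Pi.single i 1 := by
  ext m
  have := h m
  rcases eq_or_ne m i with rfl | hm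
  · simp only [Shape.coord, Pi.add_apply, Pi.single_eq_same]
    simp only [if_true] at this
    omega
  · have hm' : (m : ℕ) ≠ i := fun h => hm (Fin.ext h)
    simp only [Shape.coord, Pi.add_apply, Pi.single_eq_of_ne hm]
    simp only [hm', if_false] at this
    omega

lemma Shape.eq_empty_of_coord {n : ℕ} {c : Shape} (hc : c.row n = 0)
    (h : ∀ i, c.coord n i = -((i : ℕ) : ℤ)) : c = Shape.empty := by
  refine Shape.ext_row fun m => show c.row m = 0 from ?_
  rcases lt_or_ge m n with hm | hm
  · have := h ⟨m, hm⟩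
    simp only [Shape.coord] at this
    omega
  · exact Nat.eq_zero_of_le_zero (hc ▸ c.anti hm)

/-- `d` precedes `c` in a walk at time `M`, the two shapes differing in row `i`. -/
def StepAt (N M i : ℕ) (d c : Shape) : Prop :=
  (M < N → d.AddAt i c) ∧ (N ≤ M → c.AddAt i d)

lemma StepAt.index_unique {N M i j : ℕ} {c d : Shape} (h : StepAt N M i d c)
    (h' : StepAt N M j d c) : i = j := by
  rcases lt_or_ge M N with hM | hM
  · exact (h.1 hM).index_unique (h'.1 hM)
  · exact (h.2 hM).index_unique (h'.2 hM)

lemma StepAt.left_unique {N M i : ℕ} {c d d' : Shape} (h : StepAt N M i d c)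
    (h' : StepAt N M i d' c) : d = d' := by
  rcases lt_or_ge M N with hM | hM
  · exact (h.1 hM).left_unique (h'.1 hM)
  · exact (h.2 hM).right_unique (h'.2 hM)

lemma StepAt.row_eq_zero {n N M : ℕ} {i : Fin n} {c d : Shape} (h : StepAt N M i d c)
    (hc : c.row n = 0) : d.row n = 0 := by
  have hi : n ≠ i := i.isLt.ne'
  rcases lt_or_ge M N with hM | hM
  · rw [← (h.1 hM).row_of_ne hi, hc]
  · rw [(h.2 hM).row_of_ne hi, hc]

lemma Shape.AddAt.index_lt {n i : ℕ} {a b : Shape} (h : a.AddAt i b) (hb : b.row n = 0) :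
    i < n := by
  by_contra hi
  have h1 := b.anti (not_lt.mp hi)
  have h2 := h.row_self
  omega

lemma IsWalk.extend {n N M i : ℕ} {c d : Shape} {w : ℕ → Shape} (hw : IsWalk n N M d w)
    (hc : c.row n = 0) (h : StepAt N M i d c) :
    IsWalk n N (M + 1) c (fun t => if t ≤ M then w t else c) where
  start := by simpa using hw.start
  row_eq_zero t := by
    split_ifs
    exacts [hw.row_eq_zero t, hc]
  up t ht hN := by
    rcases (Nat.lt_succ_iff.mp ht).eq_or_lt with rfl | ht
    · simpa [hw.const t le_rfl] using ⟨i, h.1 hN⟩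
    · simpa [ht.le, Nat.succ_le_of_lt ht] using hw.up t ht hN
  down t ht hN := by
    rcases (Nat.lt_succ_iff.mp ht).eq_or_lt with rfl | ht
    · simpa [hw.const t le_rfl] using ⟨i, h.2 hN⟩
    · simpa [ht.le, Nat.succ_le_of_lt ht] using hw.down t ht hN
  const t ht := if_neg (by omega)

lemma IsWalk.truncate {n N M : ℕ} {c : Shape} {w : ℕ → Shape} (hw : IsWalk n N (M + 1) c w) :
    IsWalk n N M (w M) (fun t => w (min t M)) where
  start := by simpa using hw.start
  row_eq_zero t := hw.row_eq_zero _
  up t ht hN := by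
    simpa [ht.le, Nat.succ_le_of_lt ht] using hw.up t (by omega) hN
  down t ht hN := by
    simpa [ht.le, Nat.succ_le_of_lt ht] using hw.down t (by omega) hN
  const t ht := by simp [ht]

lemma IsWalk.exists_stepAt {n N M : ℕ} {c : Shape} {w : ℕ → Shape}
    (hw : IsWalk n N (M + 1) c w) : ∃ i : Fin n, StepAt N M i (w M) c := by
  have hc : w (M + 1) = c := hw.const _ le_rfl
  rcases lt_or_ge M N with hM | hM
  · obtain ⟨i, hi⟩ := hw.up M (Nat.lt_succ_self M) hM
    refine ⟨⟨i, hi.index_lt (hw.row_eq_zero _)⟩, fun _ => hc ▸ hi, fun h => absurd h hM.not_ge⟩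
  · obtain ⟨i, hi⟩ := hw.down M (Nat.lt_succ_self M) hM
    refine ⟨⟨i, hi.index_lt (hw.row_eq_zero _)⟩, fun h => absurd hM h.not_ge, fun _ => hc ▸ hi⟩

/-- Walks of length `M` which a step in row `i` can extend to end at `c`. -/
abbrev PrevWalk (n N M : ℕ) (c : Shape) (i : Fin n) : Type :=
  {w : ℕ → Shape // ∃ d, StepAt N M i d c ∧ IsWalk n N M d w}

/-- Extension of walks by a last step. -/
def extendWalk {n N M : ℕ} {c : Shape} (hc : c.row n = 0) (p : Σ i, PrevWalk n N M c i) :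
    {w : ℕ → Shape // IsWalk n N (M + 1) c w} :=
  ⟨fun t => if t ≤ M then p.2.1 t else c, by
    obtain ⟨d, h, hw⟩ := p.2.2
    exact hw.extend hc h⟩

lemma bijective_extendWalk {n N M : ℕ} {c : Shape} (hc : c.row n = 0) :
    Function.Bijective (extendWalk (N := N) (M := M) hc) := by
  constructor
  · rintro ⟨i, w, d, hd, hw⟩ ⟨i', w', d', hd', hw'⟩ h
    have h1 : ∀ t ≤ M, w t = w' t := fun t ht => by
      simpa [extendWalk, ht] using congrFun (congrArg Subtype.val h) t
    have hdd : d = d' := by rw [← hw.const M le_rfl, h1 M le_rfl, hw'.const M le_rfl]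
    subst hdd
    obtain rfl : i = i' := Fin.ext (hd.index_unique hd')
    obtain rfl : w = w' := funext fun t => by
      rcases le_total t M with ht | ht
      · exact h1 t ht
      · rw [hw.const t ht, hw'.const t ht]
    rfl
  · rintro ⟨w, hw⟩
    obtain ⟨i, hi⟩ := hw.exists_stepAt
    refine ⟨⟨i, _, w M, hi, hw.truncate⟩, Subtype.ext (funext fun t => ?_)⟩
    rcases le_or_gt t M with ht | ht
    · simp [extendWalk, ht]
    · simp [extendWalk, ht.not_ge, hw.const t ht]

lemma isWalk_zero_iff {n N : ℕ} {c : Shape} {w : ℕ → Shape} :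
    IsWalk n N 0 c w ↔ c = Shape.empty ∧ w = fun _ => Shape.empty := by
  constructor
  · intro h
    have hc : c = Shape.empty := (h.const 0 le_rfl).symm.trans h.start
    exact ⟨hc, funext fun t => (h.const t (Nat.zero_le t)).trans hc⟩
  · rintro ⟨rfl, rfl⟩
    exact ⟨rfl, fun _ => rfl, fun t ht => absurd ht t.not_lt_zero,
      fun t ht => absurd ht t.not_lt_zero, fun _ _ => rfl⟩

lemma alternant_up_eq_zero {n : ℕ} (k : ℕ) {c : Shape} (hc : c.row n = 0) (i : Fin n)
    (h : ∀ d : Shape, ¬ d.AddAt i c) : alternant k 0 (c.coord n - Pi.single i 1) = 0 := by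
  have hle : c.row i ≤ c.row (i + 1) := by
    by_contra hlt
    obtain ⟨d, hd⟩ := Shape.exists_addAt_left c i (not_le.mp hlt)
    exact h d hd
  have heq := hle.antisymm (c.anti (Nat.le_succ i))
  rcases (Nat.succ_le_of_lt i.isLt).eq_or_lt with hi | hi
  · rw [Nat.succ_eq_add_one] at hi
    refine alternant_eq_zero_of_le k _ i ?_
    rw [hi, hc] at heq
    simp only [Shape.coord, Pi.sub_apply, Pi.single_eq_same, heq]
    omega
  · have hne : i ≠ ⟨i + 1, hi⟩ := fun h => by simpa using congrArg Fin.val h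
    refine alternant_eq_zero_of_eq k 0 _ hne ?_
    simp only [Shape.coord, Pi.sub_apply, Pi.single_eq_same, Pi.single_eq_of_ne hne.symm, heq]
    omega

lemma alternant_down_eq_zero {n : ℕ} (k l : ℕ) {c : Shape} (i : Fin n)
    (h : ∀ d : Shape, ¬ c.AddAt i d) : alternant k l (c.coord n + Pi.single i 1) = 0 := by
  have hex : ∃ m < (i : ℕ), c.row m ≤ c.row i := by
    by_contra! hlt
    obtain ⟨d, hd⟩ := Shape.exists_addAt c i hlt
    exact h d hd
  obtain ⟨m, hm, hle⟩ := hex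
  have hpos : (i : ℕ) - 1 < n := (Nat.sub_le _ _).trans_lt i.isLt
  have heq : c.row (i - 1) = c.row i :=
    ((c.anti (by omega)).trans hle).antisymm (c.anti (Nat.sub_le _ _))
  have hne : i ≠ ⟨i - 1, hpos⟩ := fun h => by
    have : (i : ℕ) = i - 1 := congrArg Fin.val h
    omega
  refine alternant_eq_zero_of_eq k l _ hne ?_
  simp only [Shape.coord, Pi.add_apply, Pi.single_eq_same, Pi.single_eq_of_ne hne.symm, heq]
  omega

lemma alternant_succ_eq {n N M : ℕ} {c : Shape} (hc : c.row n = 0) (f : Fin n → ℂ)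
    (hf : ∀ (i : Fin n) (d : Shape), StepAt N M i d c →
      f i = alternant (min M N) (M - N) (d.coord n))
    (hf' : ∀ i : Fin n, (∀ d : Shape, ¬ StepAt N M i d c) → f i = 0) :
    alternant (min (M + 1) N) (M + 1 - N) (c.coord n) = ∑ i, f i := by
  rcases lt_or_ge M N with hM | hM
  · rw [min_eq_left hM, Nat.sub_eq_zero_of_le hM, alternant_succ_left]
    refine Finset.sum_congr rfl fun i _ => ?_
    by_cases h : ∃ d : Shape, d.AddAt i c
    · obtain ⟨d, hd⟩ := h
      rw [hf i d ⟨fun _ => hd, fun h => absurd h hM.not_ge⟩, min_eq_left hM.le,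
        Nat.sub_eq_zero_of_le hM.le, hd.coord_eq, add_sub_cancel_right]
    · push Not at h
      rw [hf' i fun d hd => h d (hd.1 hM), alternant_up_eq_zero M hc i h]
  · rw [min_eq_right (by omega), Nat.sub_add_comm hM, alternant_succ_right]
    refine Finset.sum_congr rfl fun i _ => ?_
    by_cases h : ∃ d : Shape, c.AddAt i d
    · obtain ⟨d, hd⟩ := h
      rw [hf i d ⟨fun h => absurd hM h.not_ge, fun _ => hd⟩, min_eq_right hM, hd.coord_eq]
    · push Not at h
      rw [hf' i fun d hd => h d (hd.2 hM), alternant_down_eq_zero _ _ i h]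

/-- The number of walks in Young's lattice restricted to at most `n` rows is an alternating sum
of numbers of unrestricted walks in `ℤⁿ`. -/
lemma finite_walk_and_alternant_eq_card {n : ℕ} (N M : ℕ) (c : Shape) (hc : c.row n = 0) :
    Finite {w : ℕ → Shape // IsWalk n N M c w} ∧
      alternant (min M N) (M - N) (c.coord n) =
        Nat.card {w : ℕ → Shape // IsWalk n N M c w} := by
  induction M generalizing c with
  | zero =>
    rw [Nat.zero_min, Nat.zero_sub, alternant_zero_zero _ (c.strictAnti_coord n)]
    simp only [isWalk_zero_iff]
    by_cases h : c = Shape.empty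
    · subst h
      rw [if_pos fun i => by rw [Shape.coord_empty]]
      simp only [true_and]
      exact ⟨inferInstance, by simp⟩
    · rw [if_neg fun h' => h (Shape.eq_empty_of_coord hc h')]
      simp only [h, false_and]
      exact ⟨inferInstance, by simp⟩
  | succ M ih =>
    have hprev (i : Fin n) (d : Shape) (hd : StepAt N M i d c) :
        PrevWalk n N M c i = {w : ℕ → Shape // IsWalk n N M d w} := by
      refine congrArg Subtype (funext fun w => propext ?_)
      exact ⟨fun ⟨d', hd', hw⟩ => hd.left_unique hd' ▸ hw, fun hw => ⟨d, hd, hw⟩⟩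
    have hempty (i : Fin n) (h : ∀ d : Shape, ¬ StepAt N M i d c) : IsEmpty (PrevWalk n N M c i) :=
      ⟨fun ⟨_, d, hd, _⟩ => h d hd⟩
    have hfin (i : Fin n) : Finite (PrevWalk n N M c i) := by
      by_cases h : ∃ d : Shape, StepAt N M i d c
      · obtain ⟨d, hd⟩ := h
        rw [hprev i d hd]
        exact (ih d (hd.row_eq_zero hc)).1
      · push Not at h
        have := hempty i h
        infer_instance
    have hbij := bijective_extendWalk (N := N) (M := M) hc
    refine ⟨Finite.of_surjective _ hbij.surjective, ?_⟩
    rw [← Nat.card_eq_of_bijective _ hbij, Nat.card_sigma, Nat.cast_sum]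
    refine alternant_succ_eq hc _ (fun i d hd => ?_) fun i h => ?_
    · rw [hprev i d hd, (ih d (hd.row_eq_zero hc)).2]
    · have := hempty i h
      simp

lemma alternant_eq_permCount (n N : ℕ) :
    alternant N N (fun i : Fin n => -((i : ℕ) : ℤ)) = permCount n N := by
  have h := (finite_walk_and_alternant_eq_card (n := n) N (2 * N) Shape.empty rfl).2
  rwa [Shape.coord_empty, ← permCount_eq_card_walk, min_eq_right (by omega),
    show 2 * N - N = N by omega] at h

end WalkCount

/-- Gessel's formula: `Δ_{n,λ} = ∑_{N≥0} u_n(N) λ^N / (N!)²`. -/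
theorem gessel_generating_function (lam : ℝ) (hlam : 0 < lam) (n : ℕ) :
    gesselDet lam n =
      ∑' N : ℕ, (permCount n N : ℂ) * (lam : ℂ)^N / ((N.factorial : ℂ))^2 := by
  simp only [← alternant_eq_permCount]
  exact (gesselDet_hasSum lam hlam n).tsum_eq.symm
end
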